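/- arXiv:2510.15043 — 11 statements merged into one kernel-verified Lean document; each statement's English description precedes it below -/
import Mathlib

section
/- Theorem 1 (linear stability of filtered DG schemes). Let p ≥ 0, N ≥ 1, α ∈ [0,1] and â ∈ ℝ. Let B be a symmetric bilinear form on P_p such that ∫_{−1}^{1} u(ξ)² dξ + B(u,u) > 0 for every nonzero u ∈ P_p. Suppose u_k(t) ∈ P_p, for k ∈ ℤ/Nℤ, have time derivatives u̇_k(t) ∈ P_p and satisfy, for every t ∈ ℝ, every k ∈ ℤ/Nℤ and every test polynomial v ∈ P_p, the filtered DG equations ∫_{−1}^{1} u̇_k v dξ + B(u̇_k, v) = −â ∫_{−1}^{1} (∂_ξ u_k) v dξ + (â·u_k(1,t) − f*_k(t))·v(1) − (â·u_k(−1,t) − f*_{k−1}(t))·v(−1), where the numerical flux at the interface between elements k and k+1 is f*_k(t) = â·(u_{k+1}(−1,t) + u_k(1,t))/2 − (1−α)·|â|·(u_{k+1}(−1,t) − u_k(1,t))/2. Then the energy E(t) = Σ_{k ∈ ℤ/Nℤ} [ ∫_{−1}^{1} u_k(ξ,t)² dξ + B(u_k(·,t), u_k(·,t)) ] is nonincreasing: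 its derivative satisfies E′(t) ≤ 0 for all t. -/
open Polynomial intervalIntegral

/-!
The energy is `∑ k, M (u k) (u k)` for the symmetric bilinear form `M u v = ∫ u v + B u v`.
Polynomials of degree at most `p` with differentiable coefficients can be expanded in monomials,
so the energy is differentiable with derivative `2 ∑ k, M (udot k) (u k)`
(`hasDerivAt_bilin_self`). Testing the scheme with `v = u k` and using
`∫ u' u = (u(1)² - u(-1)²) / 2` (`integral_derivative_mul_self`) leaves boundary terms only.
After reindexing the left-boundary terms over the periodic mesh, these terms combine at each
interface to `-(1 - α) |a|` times the square of the jump, which is nonpositive.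
-/

/-- The `L²(-1, 1)` inner product of polynomials, as a bilinear form. -/
noncomputable def massForm : Polynomial ℝ →ₗ[ℝ] Polynomial ℝ →ₗ[ℝ] ℝ :=
  LinearMap.mk₂ ℝ (fun u v => ∫ ξ in (-1:ℝ)..1, u.eval ξ * v.eval ξ)
    (fun u₁ u₂ v => by
      rw [← intervalIntegral.integral_add
        ((by fun_prop : Continuous fun ξ : ℝ => u₁.eval ξ * v.eval ξ).intervalIntegrable _ _)
        ((by fun_prop : Continuous fun ξ : ℝ => u₂.eval ξ * v.eval ξ).intervalIntegrable _ _)]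
      simp only [eval_add, add_mul])
    (fun c u v => by
      rw [smul_eq_mul, ← intervalIntegral.integral_const_mul]
      simp only [eval_smul, smul_eq_mul, mul_assoc])
    (fun u v₁ v₂ => by
      rw [← intervalIntegral.integral_add
        ((by fun_prop : Continuous fun ξ : ℝ => u.eval ξ * v₁.eval ξ).intervalIntegrable _ _)
        ((by fun_prop : Continuous fun ξ : ℝ => u.eval ξ * v₂.eval ξ).intervalIntegrable _ _)]
      simp only [eval_add, mul_add])
    (fun c u v => by
      rw [smul_eq_mul, ← intervalIntegral.integral_const_mul]
      simp only [eval_smul, smul_eq_mul, mul_left_comm])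

theorem massForm_apply (u v : Polynomial ℝ) :
    massForm u v = ∫ ξ in (-1:ℝ)..1, u.eval ξ * v.eval ξ := rfl

theorem massForm_comm (u v : Polynomial ℝ) : massForm u v = massForm v u := by
  simp only [massForm_apply, mul_comm]

theorem bilin_eq_sum_coeff (M : Polynomial ℝ →ₗ[ℝ] Polynomial ℝ →ₗ[ℝ] ℝ) (p : ℕ)
    (u v : Polynomial ℝ) (hu : u.degree ≤ p) (hv : v.degree ≤ p) :
    M u v = ∑ i ∈ Finset.range (p + 1), ∑ j ∈ Finset.range (p + 1),
      u.coeff i * v.coeff j * M (X ^ i) (X ^ j) := by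
  have h : ∀ w : Polynomial ℝ, w.degree ≤ p →
      w = ∑ i ∈ Finset.range (p + 1), w.coeff i • (X : Polynomial ℝ) ^ i := by
    intro w hw
    conv_lhs => rw [w.as_sum_range' (p + 1) (Nat.lt_succ_of_le (natDegree_le_of_degree_le hw))]
    exact Finset.sum_congr rfl fun i _ => smul_X_eq_monomial.symm
  conv_lhs => rw [h u hu, h v hv]
  simp only [map_sum, map_smul, LinearMap.sum_apply, LinearMap.smul_apply, smul_eq_mul,
    Finset.mul_sum, mul_assoc]
  rw [Finset.sum_comm]
  simp only [mul_left_comm]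

/-- Product rule for a symmetric bilinear form along a curve of polynomials of bounded degree
that is differentiable coefficientwise. -/
theorem hasDerivAt_bilin_self (M : Polynomial ℝ →ₗ[ℝ] Polynomial ℝ →ₗ[ℝ] ℝ)
    (hM : ∀ u v, M u v = M v u) (p : ℕ) (w wdot : ℝ → Polynomial ℝ)
    (hw : ∀ t, (w t).degree ≤ p) (hwdot : ∀ t, (wdot t).degree ≤ p)
    (hd : ∀ (n : ℕ) (t : ℝ), HasDerivAt (fun s => (w s).coeff n) ((wdot t).coeff n) t) (t : ℝ) :
    HasDerivAt (fun s => M (w s) (w s)) (2 * M (wdot t) (w t)) t := by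
  have h1 : (fun s => M (w s) (w s)) = fun s =>
      ∑ i ∈ Finset.range (p + 1), ∑ j ∈ Finset.range (p + 1),
        (w s).coeff i * (w s).coeff j * M (X ^ i) (X ^ j) :=
    funext fun s => bilin_eq_sum_coeff M p _ _ (hw s) (hw s)
  have h2 : 2 * M (wdot t) (w t) =
      ∑ i ∈ Finset.range (p + 1), ∑ j ∈ Finset.range (p + 1),
        ((wdot t).coeff i * (w t).coeff j + (w t).coeff i * (wdot t).coeff j)
          * M (X ^ i) (X ^ j) := by
    rw [two_mul]
    nth_rewrite 2 [hM]
    rw [bilin_eq_sum_coeff M p _ _ (hwdot t) (hw t), bilin_eq_sum_coeff M p _ _ (hw t) (hwdot t)]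
    simp only [← Finset.sum_add_distrib, add_mul]
  rw [h1, h2]
  exact HasDerivAt.fun_sum fun i _ => HasDerivAt.fun_sum fun j _ =>
    ((hd i t).mul (hd j t)).mul_const _

theorem integral_derivative_mul_self (u : Polynomial ℝ) :
    ∫ ξ in (-1:ℝ)..1, (derivative u).eval ξ * u.eval ξ
      = ((u.eval 1) ^ 2 - (u.eval (-1)) ^ 2) / 2 := by
  rw [intervalIntegral.integral_eq_sub_of_hasDerivAt (f := fun ξ => (u.eval ξ) ^ 2 / 2)
    (fun ξ _ => by
      refine (((u.hasDerivAt ξ).pow 2).div_const 2).congr_deriv ?_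
      norm_num
      ring)
    ((by fun_prop : Continuous fun ξ : ℝ =>
      (derivative u).eval ξ * u.eval ξ).intervalIntegrable _ _)]
  ring

/-- **Theorem 1 (linear stability of filtered DG schemes).**
For a filtered DG discretization of linear advection on a periodic mesh of `N` elements,
with a symmetric filter bilinear form `B` such that `∫ u² + B(u,u) > 0` for nonzero
`u ∈ P_p`, and numerical fluxes of the prescribed stabilized form with upwinding
parameter `α ∈ [0,1]`, the energy `E(t) = Σ_k (∫ u_k² + B(u_k,u_k))` is nonincreasing. -/
theorem fdg_linear_stability
    (p N : ℕ) [NeZero N] (hN : 1 ≤ N) (α a : ℝ) (hα : 0 ≤ α ∧ α ≤ 1)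
    (B : Polynomial ℝ →ₗ[ℝ] Polynomial ℝ →ₗ[ℝ] ℝ)
    (hBsymm : ∀ u v : Polynomial ℝ, B u v = B v u)
    (hBpos : ∀ u : Polynomial ℝ, u.degree ≤ p → u ≠ 0 →
      0 < (∫ ξ in (-1:ℝ)..1, (u.eval ξ) ^ 2) + B u u)
    (u udot : ℝ → ZMod N → Polynomial ℝ)
    (hdeg : ∀ t k, (u t k).degree ≤ p)
    (hdegdot : ∀ t k, (udot t k).degree ≤ p)
    (hderiv : ∀ (k : ZMod N) (n : ℕ) (t : ℝ),
      HasDerivAt (fun s => (u s k).coeff n) ((udot t k).coeff n) t)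
    (fstar : ℝ → ZMod N → ℝ)
    (hflux : ∀ t k, fstar t k =
      a * ((u t (k + 1)).eval (-1) + (u t k).eval 1) / 2
        - (1 - α) * |a| * ((u t (k + 1)).eval (-1) - (u t k).eval 1) / 2)
    (hFDG : ∀ (t : ℝ) (k : ZMod N) (v : Polynomial ℝ), v.degree ≤ p →
      (∫ ξ in (-1:ℝ)..1, (udot t k).eval ξ * v.eval ξ) + B (udot t k) v =
        - a * (∫ ξ in (-1:ℝ)..1, ((Polynomial.derivative (u t k)).eval ξ) * v.eval ξ)
          + (a * (u t k).eval 1 - fstar t k) * v.eval 1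
          - (a * (u t k).eval (-1) - fstar t (k - 1)) * v.eval (-1)) :
    ∀ t : ℝ,
      deriv (fun s => ∑ k : ZMod N,
        ((∫ ξ in (-1:ℝ)..1, ((u s k).eval ξ) ^ 2) + B (u s k) (u s k))) t ≤ 0 := by
  intro t
  have hE : HasDerivAt (fun s => ∑ k : ZMod N,
      ((∫ ξ in (-1:ℝ)..1, ((u s k).eval ξ) ^ 2) + B (u s k) (u s k)))
      (∑ k : ZMod N, 2 * (massForm + B) (udot t k) (u t k)) t := by
    refine HasDerivAt.fun_sum fun k _ => ?_
    simpa only [LinearMap.add_apply, massForm_apply, ← pow_two] using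
      hasDerivAt_bilin_self (massForm + B)
        (fun u v => by simp only [LinearMap.add_apply, massForm_comm u v, hBsymm u v])
        p (fun s => u s k) (fun s => udot s k) (fun s => hdeg s k) (fun s => hdegdot s k)
        (fun n s => hderiv k n s) t
  rw [hE.deriv]
  have hterm : ∀ k, 2 * (massForm + B) (udot t k) (u t k) =
      (a * (u t k).eval 1 ^ 2 - 2 * fstar t k * (u t k).eval 1)
        - (a * (u t k).eval (-1) ^ 2 - 2 * fstar t (k - 1) * (u t k).eval (-1)) := by
    intro k
    rw [LinearMap.add_apply, LinearMap.add_apply, massForm_apply, hFDG t k _ (hdeg t k),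
      integral_derivative_mul_self]
    ring
  -- Periodicity: each left-boundary term is attributed to the interface it belongs to.
  have hshift : ∑ k : ZMod N,
        (a * (u t k).eval (-1) ^ 2 - 2 * fstar t (k - 1) * (u t k).eval (-1)) =
      ∑ k : ZMod N,
        (a * (u t (k + 1)).eval (-1) ^ 2 - 2 * fstar t k * (u t (k + 1)).eval (-1)) := by
    rw [← Equiv.sum_comp (Equiv.addRight (1 : ZMod N))]
    simp
  rw [Finset.sum_congr rfl fun k _ => hterm k, Finset.sum_sub_distrib, hshift,
    ← Finset.sum_sub_distrib]
  refine Finset.sum_nonpos fun k _ => ?_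
  have hjump : (a * (u t k).eval 1 ^ 2 - 2 * fstar t k * (u t k).eval 1)
        - (a * (u t (k + 1)).eval (-1) ^ 2 - 2 * fstar t k * (u t (k + 1)).eval (-1)) =
      -((1 - α) * |a| * ((u t (k + 1)).eval (-1) - (u t k).eval 1) ^ 2) := by
    rw [hflux]
    ring
  rw [hjump, neg_nonpos]
  have hα' : 0 ≤ 1 - α := sub_nonneg.mpr hα.2
  positivity
end

section
/- Theorem 2 (conservativeness of filtered DG schemes). Let p ≥ 0 and let B be a bilinear form on P_p such that B(w, v) = 0 for every w ∈ P_p and every constant polynomial v. Suppose u_k(t) ∈ P_p has time derivative u̇_k(t) ∈ P_p, f_k(t) ∈ P_p are flux polynomials, F_k(t), F_{k−1}(t) ∈ ℝ are numerical interface flux values, and for every t and every test polynomial v ∈ P_p the filtered DG equation holds: ∫_{−1}^{1} u̇_k v dξ + B(u̇_k, v) = −∫_{−1}^{1} (∂_ξ f_k) v dξ + (f_k(1,t) − F_k(t))·v(1) − (f_k(−1,t) − F_{k−1}(t))·v(−1). Then the element average is conserved up to the interface fluxes: d/dt ∫_{−1}^{1} u_k(ξ,t) dξ = −(F_k(t)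 − F_{k−1}(t)) for all t. -/
open Polynomial intervalIntegral

/-!
Testing the scheme with `v = 1` removes the filter term, and the fundamental theorem of calculus
turns the volume term into `-(f(1) - f(-1))`, which cancels the interior boundary values of `f`.
Hence `∫ u̇ = -(F - F₋)`. Since all degrees are at most `p`, the integral of `u(t)` is a fixed finite
linear combination of its coefficients (`integral_eval_eq_sum_coeff`), so differentiating
coefficientwise shows that the time derivative of `∫ u` is `∫ u̇`.
-/

/-- The number of terms depends only on the degree bound `p`, so the same finite sum serves a whole
time-dependent family of polynomials. -/
theorem integral_eval_eq_sum_coeff {p : ℕ} {q : Polynomial ℝ} (hq : q.degree ≤ p) (a b : ℝ) :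
    ∫ ξ in a..b, q.eval ξ =
      ∑ i ∈ Finset.range (p + 1), q.coeff i * ∫ ξ in a..b, ξ ^ i := by
  have hn : q.natDegree < p + 1 := Nat.lt_succ_of_le (natDegree_le_of_degree_le hq)
  simp_rw [eval_eq_sum_range' hn]
  rw [intervalIntegral.integral_finsetSum
    fun i _ => Continuous.intervalIntegrable (by fun_prop) a b]
  simp_rw [intervalIntegral.integral_const_mul]

theorem integral_eval_derivative (q : Polynomial ℝ) (a b : ℝ) :
    ∫ ξ in a..b, (derivative q).eval ξ = q.eval b - q.eval a :=
  intervalIntegral.integral_eq_sub_of_hasDerivAt (fun x _ => q.hasDerivAt x)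
    ((derivative q).continuous.intervalIntegrable a b)

/-- **Theorem 2 (conservativeness of filtered DG schemes).**
If the filter bilinear form `B` annihilates constant polynomials in its second slot,
then for any solution of the filtered DG equations the element average is conserved
up to the interface fluxes: `d/dt ∫ u_k = −(F_k − F_{k−1})`. -/
theorem fdg_conservative
    (p : ℕ)
    (B : Polynomial ℝ →ₗ[ℝ] Polynomial ℝ →ₗ[ℝ] ℝ)
    (hBconst : ∀ w : Polynomial ℝ, w.degree ≤ p → ∀ c : ℝ, B w (Polynomial.C c) = 0)
    (u udot f : ℝ → Polynomial ℝ)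
    (hdeg : ∀ t, (u t).degree ≤ p)
    (hdegdot : ∀ t, (udot t).degree ≤ p)
    (hdegf : ∀ t, (f t).degree ≤ p)
    (hderiv : ∀ (n : ℕ) (t : ℝ),
      HasDerivAt (fun s => (u s).coeff n) ((udot t).coeff n) t)
    (F Fm : ℝ → ℝ)
    (hFDG : ∀ (t : ℝ) (v : Polynomial ℝ), v.degree ≤ p →
      (∫ ξ in (-1:ℝ)..1, (udot t).eval ξ * v.eval ξ) + B (udot t) v =
        - (∫ ξ in (-1:ℝ)..1, ((Polynomial.derivative (f t)).eval ξ) * v.eval ξ)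
          + ((f t).eval 1 - F t) * v.eval 1
          - ((f t).eval (-1) - Fm t) * v.eval (-1)) :
    ∀ t : ℝ,
      HasDerivAt (fun s => ∫ ξ in (-1:ℝ)..1, (u s).eval ξ) (-(F t - Fm t)) t := by
  intro t
  have hone : (1 : Polynomial ℝ).degree ≤ p := degree_one_le.trans (by exact_mod_cast p.zero_le)
  have hB : B (udot t) 1 = 0 := by simpa using hBconst (udot t) (hdegdot t) 1
  have key := hFDG t 1 hone
  simp only [eval_one, mul_one, hB, add_zero, integral_eval_derivative] at key
  have hflux : -(F t - Fm t) = ∫ ξ in (-1:ℝ)..1, (udot t).eval ξ := by linarith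
  rw [hflux, integral_eval_eq_sum_coeff (hdegdot t)]
  simp_rw [fun s => integral_eval_eq_sum_coeff (hdeg s) (-1) 1]
  exact HasDerivAt.fun_sum fun i _ => (hderiv i t).mul_const _
end

section
/- Theorem 3 (conservativeness of flux reconstruction schemes). Let p ≥ 0 and let Q be a real (p+1)×(p+1) matrix whose first row and first column are zero (Q_{0j} = Q_{i0} = 0 for all i, j) and such that M + Q is invertible, where M is the Legendre-basis mass matrix. Then e₀ᵀ(M+Q)^{−1} r = 1/2 and e₀ᵀ(M+Q)^{−1} l = 1/2. Consequently the flux reconstruction correction functions defined by g_R′(ξ) = ψ(ξ)ᵀ(M+Q)^{−1} r and g_L′(ξ) = −ψ(ξ)ᵀ(M+Q)^{−1} l satisfy ∫_{−1}^{1} g_R′ dξ = 2·e₀ᵀ(M+Q)^{−1} r = 1 and ∫_{−1}^{1} g_L′ dξ = −2·e₀ᵀ(M+Q)^{−1} l = −1, so the scheme is conservative. -/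
/-!
By orthogonality of the Legendre polynomials `ψ_j` (`j ≥ 1`) to constants, the integral of
`∑ j, ψ_j x_j` over `[-1, 1]` is `2 x_0`. If `x = (M + Q)⁻¹ v`, the zeroth row of `(M + Q) x = v`
reads `2 x_0 = v_0`, since `M_{00} = 2` and the zeroth row of `Q` vanishes; for both boundary
vectors `v_0 = 1`. Orthogonality to constants comes from Rodrigues' formula: for `n = m + 1`,
`ψ_n` is a multiple of the derivative of `D^m (X² - 1)^{m+1}`, and that polynomial is divisible
by `X² - 1`, hence vanishes at both endpoints.
-/

open Polynomial Matrix intervalIntegral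

/-- The `n`-th Legendre polynomial (Rodrigues' formula), normalized so that `ψ_n(1) = 1`. -/
noncomputable def legendreP (n : ℕ) : Polynomial ℝ :=
  ((1 : ℝ) / (2 ^ n * n.factorial)) • (Polynomial.derivative^[n] ((X ^ 2 - 1) ^ n))

theorem integral_legendreP_zero : ∫ ξ in (-1 : ℝ)..1, (legendreP 0).eval ξ = 2 := by
  norm_num [legendreP]

theorem integral_legendreP_succ (m : ℕ) :
    ∫ ξ in (-1 : ℝ)..1, (legendreP (m + 1)).eval ξ = 0 := by
  set F : Polynomial ℝ := Polynomial.derivative^[m] ((X ^ 2 - 1) ^ (m + 1)) with hF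
  have hdvd : (X ^ 2 - 1 : Polynomial ℝ) ∣ F := by
    simpa using pow_sub_dvd_iterate_derivative_pow (X ^ 2 - 1 : Polynomial ℝ) (m + 1) m
  obtain ⟨G, hG⟩ := hdvd
  have hP : ∀ ξ : ℝ, (legendreP (m + 1)).eval ξ
      = (1 : ℝ) / (2 ^ (m + 1) * (m + 1).factorial) * F.derivative.eval ξ := by
    intro ξ
    rw [legendreP, Function.iterate_succ_apply', eval_smul, smul_eq_mul]
  simp_rw [hP]
  rw [intervalIntegral.integral_const_mul,
    intervalIntegral.integral_eq_sub_of_hasDerivAt (fun x _ => F.hasDerivAt x)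
      (F.derivative.continuous.intervalIntegrable _ _), hG]
  simp

theorem integral_sum_legendreP (p : ℕ) (x : Fin (p + 1) → ℝ) :
    ∫ ξ in (-1 : ℝ)..1, ∑ j : Fin (p + 1), (legendreP (j : ℕ)).eval ξ * x j = 2 * x 0 := by
  have hint : ∀ j ∈ Finset.univ, IntervalIntegrable
      (fun ξ : ℝ => (legendreP ((j : Fin (p + 1)) : ℕ)).eval ξ * x j)
      MeasureTheory.volume (-1) 1 := fun j _ =>
    ((legendreP (j : ℕ)).continuous.mul continuous_const).intervalIntegrable _ _
  rw [intervalIntegral.integral_finsetSum hint]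
  simp_rw [intervalIntegral.integral_mul_const]
  rw [Fin.sum_univ_succ]
  simp [integral_legendreP_zero, integral_legendreP_succ]

/-- The zeroth row of `A` being `2 e₀ᵀ`, the zeroth equation of `A x = v` involves only `x 0`. -/
theorem inv_mulVec_zero {p : ℕ} (A : Matrix (Fin (p + 1)) (Fin (p + 1)) ℝ) (hA : IsUnit A)
    (hrow : ∀ j, A 0 j = if j = 0 then 2 else 0) (v : Fin (p + 1) → ℝ) :
    (A⁻¹ *ᵥ v) 0 = v 0 / 2 := by
  have h : A *ᵥ (A⁻¹ *ᵥ v) = v := by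
    rw [Matrix.mulVec_mulVec, Matrix.mul_nonsing_inv A ((Matrix.isUnit_iff_isUnit_det A).mp hA),
      Matrix.one_mulVec]
  have h0 := congrFun h 0
  rw [Matrix.mulVec, dotProduct] at h0
  simp only [hrow, ite_mul, zero_mul, Finset.sum_ite_eq', Finset.mem_univ, if_true] at h0
  linarith

/-- **Theorem 3 (conservativeness of flux reconstruction schemes).**
If `Q` has zero first row and first column (Legendre basis) and `M + Q` is invertible,
where `M` is the Legendre mass matrix, then `e₀ᵀ(M+Q)⁻¹ r = 1/2` and
`e₀ᵀ(M+Q)⁻¹ l = 1/2`; consequently the FR correction functions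
`g_R′(ξ) = ψ(ξ)ᵀ(M+Q)⁻¹ r` and `g_L′(ξ) = −ψ(ξ)ᵀ(M+Q)⁻¹ l` satisfy
`∫_{−1}^{1} g_R′ = 1` and `∫_{−1}^{1} g_L′ = −1`, i.e. the scheme is conservative. -/
theorem fr_conservative
    (p : ℕ)
    (M Q : Matrix (Fin (p + 1)) (Fin (p + 1)) ℝ)
    (hM : M = Matrix.diagonal (fun j : Fin (p + 1) => 2 / (2 * ((j : ℕ) : ℝ) + 1)))
    (hQrow : ∀ j, Q 0 j = 0) (hQcol : ∀ i, Q i 0 = 0)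
    (hinv : IsUnit (M + Q))
    (r l : Fin (p + 1) → ℝ)
    (hr : r = fun _ => 1) (hl : l = fun j => (-1 : ℝ) ^ j.val) :
    (((M + Q)⁻¹ *ᵥ r) 0 = 1 / 2 ∧ ((M + Q)⁻¹ *ᵥ l) 0 = 1 / 2) ∧
      (∫ ξ in (-1:ℝ)..1, ∑ j : Fin (p + 1),
          (legendreP (j : ℕ)).eval ξ * ((M + Q)⁻¹ *ᵥ r) j) = 1 ∧
      (∫ ξ in (-1:ℝ)..1, -(∑ j : Fin (p + 1),
          (legendreP (j : ℕ)).eval ξ * ((M + Q)⁻¹ *ᵥ l) j)) = -1 := by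
  have hrow : ∀ j, (M + Q) 0 j = if j = 0 then 2 else 0 := by
    intro j
    rcases eq_or_ne j 0 with rfl | hj
    · simp [hM, hQrow]
    · simp [hM, hQrow, hj, Matrix.diagonal_apply_ne' _ hj]
  have h1 : ((M + Q)⁻¹ *ᵥ r) 0 = 1 / 2 := by
    rw [inv_mulVec_zero _ hinv hrow, hr]
  have h2 : ((M + Q)⁻¹ *ᵥ l) 0 = 1 / 2 := by
    rw [inv_mulVec_zero _ hinv hrow, hl]
    simp
  refine ⟨⟨h1, h2⟩, ?_, ?_⟩
  · rw [integral_sum_legendreP, h1]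
    norm_num
  · rw [intervalIntegral.integral_neg, integral_sum_legendreP, h2]
    norm_num
end

section
/- Stability characterization of ESFR schemes. Let p ≥ 1 and c ∈ ℝ, and set k_p = (2p)!/(2^p · p!). The quadratic form u ↦ ∫_{−1}^{1} u(ξ)² dξ + (c/2) ∫_{−1}^{1} (u^{(p)}(ξ))² dξ is positive definite on the space of real polynomials of degree at most p (i.e., it is strictly positive for every nonzero such u) if and only if c > −2/((2p+1)·k_p²). -/
/-!
Let `W = (X² - 1)^p` and let `R = W^{(p)}` be the (unnormalized) Legendre polynomial of Rodrigues'
formula. Integrating by parts `p` times, with vanishing boundary terms, shows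
`∫ R u = u^{(p)} ∫ (1 - ξ²)^p` for every `u` of degree at most `p`, whose `p`-th derivative is
constant. Hence `R` is orthogonal to the polynomials of degree less than `p`, and
`∫ R² = (2p)! J` with `J = ∫ (1 - ξ²)^p`.

Writing `u = v + a R` with `v^{(p)} = 0`, the quadratic form becomes
`∫ v² + a² ((2p)! J + c (2p)!²)`. It is therefore positive definite iff the second coefficient is
positive. A recursion in `p` gives `J = 2^(2p+1) p!² / (2p+1)!`, so this is the stated bound on `c`.
-/

open Polynomial intervalIntegral

lemma poly_intervalIntegrable (q : ℝ[X]) (a b : ℝ) :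
    IntervalIntegrable (fun x => q.eval x) MeasureTheory.volume a b :=
  q.continuous.intervalIntegrable a b

lemma integral_derivative_eval (q : ℝ[X]) :
    ∫ x in (-1:ℝ)..1, (derivative q).eval x = q.eval 1 - q.eval (-1) :=
  integral_eq_sub_of_hasDerivAt (fun x _ => q.hasDerivAt x)
    (poly_intervalIntegrable _ _ _)

/-- Repeated integration by parts, when all boundary terms vanish. -/
lemma integral_iterate_by_parts (w : ℝ[X]) (n : ℕ)
    (h : ∀ k < n, (derivative^[k] w).eval 1 = 0 ∧ (derivative^[k] w).eval (-1) = 0) (u : ℝ[X]) :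
    ∫ x in (-1:ℝ)..1, (derivative^[n] w * u).eval x
      = (-1) ^ n * ∫ x in (-1:ℝ)..1, (w * derivative^[n] u).eval x := by
  induction n generalizing u with
  | zero => simp
  | succ n ih =>
    have ih' := ih (fun k hk => h k (by omega)) (derivative u)
    have hd := integral_derivative_eval (derivative^[n] w * u)
    obtain ⟨h1, h2⟩ := h n (by omega)
    simp only [derivative_mul, eval_add] at hd
    rw [integral_add (poly_intervalIntegrable _ _ _) (poly_intervalIntegrable _ _ _)] at hd
    rw [eval_mul, eval_mul, h1, h2] at hd
    rw [Function.iterate_succ_apply', Function.iterate_succ_apply, pow_succ]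
    linarith

/-- The polynomial `(X² - 1)^p` of Rodrigues' formula. -/
noncomputable def rodW (p : ℕ) : ℝ[X] := (X ^ 2 - 1) ^ p

/-- The Legendre polynomial of degree `p` up to normalization: the `p`-th derivative of
`(X² - 1)^p`, without the factor `1 / (2^p p!)`. -/
noncomputable def rodR (p : ℕ) : ℝ[X] := derivative^[p] (rodW p)

lemma rodW_monic (p : ℕ) : (rodW p).Monic := by
  have : (X ^ 2 - 1 : ℝ[X]).Monic := by
    simpa using monic_X_pow_sub_C (1 : ℝ) (two_ne_zero)
  exact this.pow p

lemma rodW_natDegree (p : ℕ) : (rodW p).natDegree = 2 * p := by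
  have : (X ^ 2 - 1 : ℝ[X]).natDegree = 2 := by
    simpa using natDegree_X_pow_sub_C (n := 2) (r := (1 : ℝ))
  rw [rodW, natDegree_pow, this, mul_comm]

lemma rodW_boundary (p k : ℕ) (hk : k < p) :
    (derivative^[k] (rodW p)).eval 1 = 0 ∧ (derivative^[k] (rodW p)).eval (-1) = 0 := by
  have hdvd : (X ^ 2 - 1 : ℝ[X]) ∣ derivative^[k] (rodW p) :=
    (dvd_pow_self _ (by omega)).trans
      (pow_sub_dvd_iterate_derivative_of_pow_dvd k (dvd_refl (rodW p)))
  obtain ⟨q, hq⟩ := hdvd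
  rw [hq]
  simp

lemma iterate_derivative_eq_C (u : ℝ[X]) (n : ℕ) (h : u.natDegree ≤ n) :
    derivative^[n] u = C ((n.factorial : ℝ) * u.coeff n) := by
  have h0 : (derivative^[n] u).natDegree = 0 := by
    have := natDegree_iterate_derivative u n
    omega
  rw [eq_C_of_natDegree_eq_zero h0, coeff_iterate_derivative]
  simp [Nat.descFactorial_self]

lemma iterate_derivative_rodR (p : ℕ) :
    derivative^[p] (rodR p) = C ((2 * p).factorial : ℝ) := by
  rw [rodR, ← Function.iterate_add_apply, ← two_mul,
    iterate_derivative_eq_C _ _ (rodW_natDegree p).le]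
  have := rodW_monic p
  rw [Monic, leadingCoeff, rodW_natDegree] at this
  rw [this, mul_one]

lemma rodR_natDegree_le (p : ℕ) : (rodR p).natDegree ≤ p := by
  have := natDegree_iterate_derivative (rodW p) p
  rw [rodW_natDegree] at this
  rw [rodR]
  omega

/-- Pairing with the Legendre polynomial only sees the `p`-th derivative, if that is constant. -/
lemma integral_rodR_mul (p : ℕ) (u : ℝ[X]) (d : ℝ) (hu : derivative^[p] u = C d) :
    ∫ x in (-1:ℝ)..1, (rodR p).eval x * u.eval x
      = d * ∫ x in (-1:ℝ)..1, (1 - x ^ 2) ^ p := by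
  have h := integral_iterate_by_parts (rodW p) p (rodW_boundary p) u
  rw [hu] at h
  simp only [eval_mul, eval_C] at h
  rw [rodR, h, ← integral_const_mul, ← integral_const_mul]
  congr 1
  ext x
  have : (1 - x ^ 2 : ℝ) ^ p = (-1) ^ p * (x ^ 2 - 1) ^ p := by
    rw [← mul_pow]; ring
  rw [this, rodW]
  simp
  ring

lemma integral_one_sub_sq_pow_succ (p : ℕ) :
    (2 * (p : ℝ) + 3) * ∫ x in (-1:ℝ)..1, (1 - x ^ 2) ^ (p + 1)
      = (2 * p + 2) * ∫ x in (-1:ℝ)..1, (1 - x ^ 2) ^ p := by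
  -- integrate the derivative of `x (1 - x²)^(p+1)`
  have h := integral_derivative_eval (X * (1 - X ^ 2) ^ (p + 1))
  have e : ∀ x : ℝ, (derivative (X * (1 - X ^ 2) ^ (p + 1) : ℝ[X])).eval x
      = (2 * p + 3) * (1 - x ^ 2) ^ (p + 1) - (2 * p + 2) * (1 - x ^ 2) ^ p := by
    intro x
    simp [derivative_mul, derivative_pow]
    ring
  simp only [e] at h
  rw [integral_sub (Continuous.intervalIntegrable (by fun_prop) _ _)
    (Continuous.intervalIntegrable (by fun_prop) _ _), integral_const_mul,
    integral_const_mul] at h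
  simp at h
  linarith

lemma integral_one_sub_sq_pow (p : ℕ) :
    ∫ x in (-1:ℝ)..1, (1 - x ^ 2) ^ p
      = 2 * (2 ^ p * (p.factorial : ℝ)) ^ 2 / ((2 * p + 1) * (2 * p).factorial) := by
  induction p with
  | zero => norm_num
  | succ p ih =>
    have h := integral_one_sub_sq_pow_succ p
    rw [ih] at h
    have h3 : (2 * (p : ℝ) + 3) ≠ 0 := by positivity
    have hf : (0 : ℝ) < (2 * p).factorial := by positivity
    rw [← mul_right_inj' h3, h, show 2 * (p + 1) = 2 * p + 1 + 1 by ring,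
      Nat.factorial_succ, Nat.factorial_succ, Nat.factorial_succ]
    push_cast
    field_simp
    ring

lemma integral_sq_pos (v : ℝ[X]) (hv : v ≠ 0) :
    0 < ∫ x in (-1:ℝ)..1, (v.eval x) ^ 2 := by
  obtain ⟨x, hx, hx0⟩ : ∃ x ∈ Set.Icc (-1:ℝ) 1, v.eval x ≠ 0 := by
    by_contra! hcon
    exact hv (eq_zero_of_infinite_isRoot v
      ((Set.Icc_infinite (by norm_num : (-1:ℝ) < 1)).mono hcon))
  exact integral_pos (by norm_num) (by fun_prop) (fun y _ => sq_nonneg _)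
    ⟨x, hx, by positivity⟩

/-- The quadratic form diagonalized along the decomposition `u = v + a R`, where
`a = u^{(p)} / (2p)!` and `v^{(p)} = 0`. -/
lemma esfr_form_eq (p : ℕ) (c a : ℝ) (v : ℝ[X]) (hv : derivative^[p] v = 0) :
    (∫ ξ in (-1:ℝ)..1, ((v + C a * rodR p).eval ξ) ^ 2)
      + c / 2 * ∫ ξ in (-1:ℝ)..1, ((derivative^[p] (v + C a * rodR p)).eval ξ) ^ 2
    = (∫ ξ in (-1:ℝ)..1, (v.eval ξ) ^ 2)
      + a ^ 2 * ((2 * p).factorial * (∫ x in (-1:ℝ)..1, (1 - x ^ 2) ^ p)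
        + c * ((2 * p).factorial : ℝ) ^ 2) := by
  have h1 := integral_rodR_mul p v 0 (by rw [hv, C_0])
  have h2 := integral_rodR_mul p (rodR p) _ (iterate_derivative_rodR p)
  have hd : derivative^[p] (v + C a * rodR p) = C (a * (2 * p).factorial) := by
    rw [iterate_map_add, hv, iterate_derivative_C_mul, iterate_derivative_rodR, C_mul,
      zero_add]
  have e : ∀ ξ : ℝ, ((v + C a * rodR p).eval ξ) ^ 2
      = (v.eval ξ) ^ 2 + (2 * a * ((rodR p).eval ξ * v.eval ξ)
        + a ^ 2 * ((rodR p).eval ξ * (rodR p).eval ξ)) := by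
    intro ξ
    simp only [eval_add, eval_mul, eval_C]
    ring
  simp only [e, hd, eval_C]
  rw [integral_add (Continuous.intervalIntegrable (by fun_prop) _ _)
    (Continuous.intervalIntegrable (by fun_prop) _ _),
    integral_add (Continuous.intervalIntegrable (by fun_prop) _ _)
    (Continuous.intervalIntegrable (by fun_prop) _ _), integral_const_mul, integral_const_mul,
    h1, h2, integral_const]
  simp only [smul_eq_mul]
  ring

lemma esfr_coeff_pos_iff (p : ℕ) (c : ℝ) :
    0 < (2 * p).factorial * (∫ x in (-1:ℝ)..1, (1 - x ^ 2) ^ p) + c * ((2 * p).factorial : ℝ) ^ 2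
      ↔ c > -2 / ((2 * (p : ℝ) + 1) *
          (((2 * p).factorial : ℝ) / (2 ^ p * (p.factorial : ℝ))) ^ 2) := by
  rw [integral_one_sub_sq_pow]
  have hf : (0 : ℝ) < (2 * p).factorial := by positivity
  have hg : (0 : ℝ) < p.factorial := by positivity
  have key : (2 * p).factorial * (2 * (2 ^ p * (p.factorial : ℝ)) ^ 2
        / ((2 * p + 1) * (2 * p).factorial)) + c * ((2 * p).factorial : ℝ) ^ 2
      = ((2 * p).factorial : ℝ) ^ 2 * (c - -2 / ((2 * (p : ℝ) + 1) *
          (((2 * p).factorial : ℝ) / (2 ^ p * (p.factorial : ℝ))) ^ 2)) := by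
    field_simp
    ring
  rw [key, mul_pos_iff_of_pos_left (by positivity), sub_pos]

/-- **Stability characterization of ESFR schemes.**
For `p ≥ 1`, `c ∈ ℝ` and `k_p = (2p)!/(2^p p!)`, the quadratic form
`u ↦ ∫_{−1}^{1} u² + (c/2) ∫_{−1}^{1} (u^{(p)})²` is positive definite on the space of
real polynomials of degree at most `p` if and only if `c > −2/((2p+1)·k_p²)`. -/
theorem esfr_stability_characterization
    (p : ℕ) (hp : 1 ≤ p) (c : ℝ) :
    (∀ u : Polynomial ℝ, u.degree ≤ p → u ≠ 0 →
        0 < (∫ ξ in (-1:ℝ)..1, (u.eval ξ) ^ 2)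
            + c / 2 * ∫ ξ in (-1:ℝ)..1, ((Polynomial.derivative^[p] u).eval ξ) ^ 2)
      ↔ c > -2 / ((2 * (p : ℝ) + 1) *
          (((2 * p).factorial : ℝ) / (2 ^ p * (p.factorial : ℝ))) ^ 2) := by
  rw [← esfr_coeff_pos_iff]
  have hf : ((2 * p).factorial : ℝ) ≠ 0 := by positivity
  constructor
  · intro h
    have hne : rodR p ≠ 0 := by
      intro h0
      have := iterate_derivative_rodR p
      rw [h0, iterate_derivative_zero] at this
      exact hf (C_eq_zero.mp this.symm)
    have h' := h (rodR p) (natDegree_le_iff_degree_le.mp (rodR_natDegree_le p)) hne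
    have e := esfr_form_eq p c 1 0 iterate_derivative_zero
    simp only [C_1, one_mul, zero_add] at e
    rw [e] at h'
    simpa using h'
  · intro hpos u hu hu0
    obtain ⟨d, hd⟩ : ∃ d : ℝ, derivative^[p] u = C d :=
      ⟨_, iterate_derivative_eq_C u p (natDegree_le_iff_degree_le.mpr hu)⟩
    obtain ⟨a, ha⟩ : ∃ a : ℝ, a * (2 * p).factorial = d := ⟨d / _, div_mul_cancel₀ _ hf⟩
    obtain ⟨v, rfl⟩ : ∃ v, u = v + C a * rodR p := ⟨u - C a * rodR p, by ring⟩
    have hv : derivative^[p] v = 0 := by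
      rw [iterate_map_add, iterate_derivative_C_mul, iterate_derivative_rodR, ← ha,
        C_mul] at hd
      simpa using hd
    rw [esfr_form_eq p c a v hv]
    by_cases hv0 : v = 0
    · have ha0 : a ≠ 0 := by
        rintro rfl
        simp [hv0] at hu0
      subst hv0
      simp only [eval_zero, ne_eq, OfNat.ofNat_ne_zero, not_false_eq_true, zero_pow,
        integral_zero, zero_add]
      positivity
    · exact add_pos_of_pos_of_nonneg (integral_sq_pos v hv0)
        (mul_nonneg (sq_nonneg a) hpos.le)
end

section
/- Stability characterization of two-parameter SSDG schemes. Let p ≥ 2 and c_{p−1}, c_p ∈ ℝ, and set k_m = (2m)!/(2^m · m!). The quadratic form u ↦ ∫_{−1}^{1} u(ξ)² dξ + (c_{p−1}/2) ∫_{−1}^{1} (u^{(p−1)}(ξ))² dξ + (c_p/2) ∫_{−1}^{1} (u^{(p)}(ξ))² dξ is positive definite on the space of real polynomials of degree at most p if and only if c_{p−1} > −2/(k_{p−1}²·(2p−1)) and c_p > −(1/3)·c_{p−1} − 2/(k_p²·(2p+1)). -/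
/-!
In the Legendre basis the quadratic form is diagonal. Write `u = a L_p + b L_{p-1} + w` with
`L_m = (d/dx)^m (x² - 1)^m` and `deg w < p - 1`. Repeated integration by parts
(`polyInt_rodrigues_mul`) shows that the three parts are orthogonal and, together with the value of
`∫ (x² - 1)^m`, gives `∫ L_m² = 2 (2^m m!)² / (2m + 1)`. Moreover `L_m^{(m)} = (2m)!`, and since
`(x² - 1)^p` is even, `L_p^{(p-1)} = (2p)! x` has no constant term. Hence `u^{(p-1)}` and `u^{(p)}`
contribute only multiples of `a²` and `b²` (`form_eq`). The form is therefore positive definite iff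
the coefficients of `a²` and `b²` are positive, which after clearing denominators (`bound_iff`) are
exactly the two bounds; necessity is read off at `u = L_{p-1}` and `u = L_p`.
-/

open Polynomial intervalIntegral

/-! ### Integrals of polynomials over `[-1, 1]` -/

/-- Integration over `[-1, 1]` as a linear functional on real polynomials. -/
noncomputable def polyInt : ℝ[X] →ₗ[ℝ] ℝ where
  toFun f := ∫ x in (-1 : ℝ)..1, f.eval x
  map_add' f g := by
    simp only [eval_add]
    exact integral_add (f.continuous.intervalIntegrable _ _) (g.continuous.intervalIntegrable _ _)
  map_smul' c f := by
    simp [eval_smul]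

lemma polyInt_apply (f : ℝ[X]) : polyInt f = ∫ x in (-1 : ℝ)..1, f.eval x := rfl

lemma integral_eval_sq (f : ℝ[X]) : ∫ x in (-1 : ℝ)..1, f.eval x ^ 2 = polyInt (f ^ 2) := by
  simp [polyInt_apply]

lemma polyInt_derivative (f : ℝ[X]) : polyInt (derivative f) = f.eval 1 - f.eval (-1) := by
  rw [polyInt_apply]
  exact integral_eq_sub_of_hasDerivAt (fun x _ => f.hasDerivAt x)
    ((derivative f).continuous.intervalIntegrable _ _)

/-- Integration by parts when the boundary terms vanish because `X ^ 2 - 1` divides one factor. -/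
lemma polyInt_derivative_mul {f : ℝ[X]} (hf : X ^ 2 - 1 ∣ f) (g : ℝ[X]) :
    polyInt (derivative f * g) = -polyInt (f * derivative g) := by
  have h := polyInt_derivative (f * g)
  obtain ⟨r, rfl⟩ := hf
  rw [derivative_mul, map_add] at h
  simp only [eval_mul, eval_sub, eval_pow, eval_X, eval_one] at h
  linarith

lemma polyInt_sq_pos {f : ℝ[X]} (hf : f ≠ 0) : 0 < polyInt (f ^ 2) := by
  -- A nonzero polynomial has only finitely many roots, so it is nonzero somewhere in `[-1, 1]`.
  have hex : ∃ c ∈ Set.Icc (-1 : ℝ) 1, f.eval c ≠ 0 := by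
    by_contra! h
    exact hf (f.eq_zero_of_infinite_isRoot
      ((Set.Icc_infinite (by norm_num : (-1 : ℝ) < 1)).mono fun x hx => h x hx))
  obtain ⟨c, hc, hne⟩ := hex
  rw [polyInt_apply]
  refine intervalIntegral.integral_pos (by norm_num) (f ^ 2).continuous.continuousOn
    (fun x _ => by rw [eval_pow]; positivity) ⟨c, hc, ?_⟩
  rw [eval_pow]; positivity

lemma polyInt_one : polyInt 1 = 2 := by simp [polyInt_apply]; norm_num

lemma polyInt_X : polyInt X = 0 := by simp [polyInt_apply]

lemma polyInt_X_sq : polyInt (X ^ 2) = 2 / 3 := by simp [polyInt_apply]; norm_num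

/-! ### Legendre polynomials -/

/-- The Legendre polynomial of degree `m` up to scaling, by the Rodrigues formula
`(d/dx)^m (x² - 1)^m`; the usual normalisation divides this by `2 ^ m * m!`. -/
noncomputable def rodrigues (m : ℕ) : ℝ[X] := derivative^[m] ((X ^ 2 - 1) ^ m)

/-- Repeated integration by parts in the Rodrigues formula. -/
lemma polyInt_rodrigues_mul (m : ℕ) (g : ℝ[X]) :
    polyInt (rodrigues m * g) = (-1) ^ m * polyInt ((X ^ 2 - 1) ^ m * derivative^[m] g) := by
  have key : ∀ k ≤ m, polyInt (rodrigues m * g) =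
      (-1) ^ k * polyInt (derivative^[m - k] ((X ^ 2 - 1) ^ m) * derivative^[k] g) := by
    intro k
    induction k with
    | zero => intro _; simp [rodrigues]
    | succ k ih =>
      intro hk
      have hdvd : (X ^ 2 - 1 : ℝ[X]) ∣ derivative^[m - (k + 1)] ((X ^ 2 - 1) ^ m) :=
        (dvd_pow_self _ (by omega)).trans
          (pow_sub_dvd_iterate_derivative_pow (X ^ 2 - 1 : ℝ[X]) m (m - (k + 1)))
      have hs : m - k = (m - (k + 1)) + 1 := by omega
      rw [ih (by omega), hs, Function.iterate_succ_apply', polyInt_derivative_mul hdvd,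
        ← Function.iterate_succ_apply' derivative k g, pow_succ]
      ring
  simpa using key m le_rfl

lemma polyInt_rodrigues_mul_eq_zero {m : ℕ} {g : ℝ[X]} (hg : derivative^[m] g = 0) :
    polyInt (rodrigues m * g) = 0 := by
  rw [polyInt_rodrigues_mul, hg]; simp

/-- `(X ^ 2 - 1) ^ m` has leading term `X ^ (2 * m)` and no term of degree `2 * m - 1`. -/
lemma exists_sq_sub_one_pow (m : ℕ) :
    ∃ r : ℝ[X], (X ^ 2 - 1 : ℝ[X]) ^ m = X ^ (2 * m) + r ∧ derivative^[2 * m - 1] r = 0 := by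
  suffices h : ∃ r : ℝ[X], (X ^ 2 - 1 : ℝ[X]) ^ m = X ^ (2 * m) + r ∧
      r.degree < ((2 * m - 1 : ℕ) : WithBot ℕ) by
    obtain ⟨r, h1, h2⟩ := h
    exact ⟨r, h1, iterate_derivative_eq_zero_of_degree_lt h2⟩
  induction m with
  | zero => exact ⟨0, by simp, by simp⟩
  | succ m ih =>
    obtain ⟨r, h1, h2⟩ := ih
    refine ⟨r * (X ^ 2 - 1) - X ^ (2 * m), by rw [pow_succ, h1]; ring, ?_⟩
    have hq : (X ^ 2 - 1 : ℝ[X]).degree = 2 := by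
      rw [← C_1]; exact degree_X_pow_sub_C (by norm_num) 1
    refine (degree_sub_le _ _).trans_lt (max_lt ?_ ?_)
    · rw [degree_mul, hq]
      by_cases hr : r = 0
      · simp [hr]
      · rw [degree_eq_natDegree hr] at h2 ⊢
        norm_cast at h2 ⊢
        omega
    · rw [degree_X_pow]
      norm_cast
      omega

lemma iterate_derivative_rodrigues (m : ℕ) :
    derivative^[m] (rodrigues m) = C ((2 * m).factorial : ℝ) := by
  obtain ⟨r, h1, h2⟩ := exists_sq_sub_one_pow m
  have h3 : derivative^[2 * m] r = 0 := by
    rw [show 2 * m = (2 * m - (2 * m - 1)) + (2 * m - 1) by omega, Function.iterate_add_apply, h2,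
      iterate_derivative_zero]
  rw [rodrigues, ← Function.iterate_add_apply, ← two_mul, h1, iterate_map_add, h3, add_zero,
    iterate_derivative_X_pow_eq_C_mul]
  simp [Nat.descFactorial_self]

lemma iterate_derivative_rodrigues_succ (m : ℕ) :
    derivative^[m] (rodrigues (m + 1)) = C ((2 * (m + 1)).factorial : ℝ) * X := by
  obtain ⟨r, h1, h2⟩ := exists_sq_sub_one_pow (m + 1)
  have hs : m + (m + 1) = 2 * (m + 1) - 1 := by omega
  rw [rodrigues, ← Function.iterate_add_apply, hs, h1, iterate_map_add, h2, add_zero,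
    iterate_derivative_X_pow_eq_C_mul]
  have h4 := Nat.factorial_mul_descFactorial (show 2 * (m + 1) - 1 ≤ 2 * (m + 1) by omega)
  rw [show 2 * (m + 1) - (2 * (m + 1) - 1) = 1 by omega] at h4 ⊢
  simp only [Nat.factorial_one, one_mul] at h4
  rw [h4, pow_one]

/-- The value of `J m = ∫ (x² - 1)^m`, with the denominator cleared. Integration by parts against
`x` gives `(2m + 3) J (m + 1) = -2 (m + 1) J m`. -/
lemma polyInt_sq_sub_one_pow (m : ℕ) :
    polyInt ((X ^ 2 - 1) ^ m) * (2 * m + 1).factorial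
      = (-1) ^ m * (2 * (2 ^ m * m.factorial) ^ 2) := by
  induction m with
  | zero => simp [polyInt_one]
  | succ m ih =>
    have hrec : (2 * (m : ℝ) + 3) * polyInt ((X ^ 2 - 1) ^ (m + 1))
        = -(2 * (m + 1)) * polyInt ((X ^ 2 - 1) ^ m) := by
      have h := polyInt_derivative_mul (dvd_pow_self (X ^ 2 - 1 : ℝ[X]) (Nat.succ_ne_zero m)) X
      have hd : derivative ((X ^ 2 - 1 : ℝ[X]) ^ (m + 1)) * X
          = (2 * ((m : ℝ) + 1)) • ((X ^ 2 - 1) ^ (m + 1) + (X ^ 2 - 1) ^ m) := by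
        rw [derivative_pow_succ, smul_eq_C_mul]
        simp only [derivative_sub, derivative_X_sq, derivative_one, C_mul, C_add, C_1, map_ofNat, map_natCast]
        ring
      rw [Nat.succ_eq_add_one, hd, derivative_X, mul_one, map_smul, map_add, smul_eq_mul] at h
      linarith
    have hf : ((2 * (m + 1) + 1).factorial : ℝ)
        = (2 * m + 3) * ((2 * m + 2) * (2 * m + 1).factorial) := by
      rw [show 2 * (m + 1) + 1 = (2 * m + 1 + 1) + 1 by ring, Nat.factorial_succ,
        Nat.factorial_succ]
      push_cast; ring
    rw [hf, Nat.factorial_succ m]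
    push_cast
    linear_combination (2 * (m : ℝ) + 2) * (2 * m + 1).factorial * hrec
      - 4 * ((m : ℝ) + 1) ^ 2 * ih

lemma polyInt_rodrigues_sq (m : ℕ) :
    polyInt (rodrigues m ^ 2) = 2 * (2 ^ m * m.factorial : ℝ) ^ 2 / (2 * m + 1) := by
  have hJ := polyInt_sq_sub_one_pow m
  rw [Nat.factorial_succ] at hJ
  push_cast at hJ
  rw [sq, polyInt_rodrigues_mul, iterate_derivative_rodrigues, mul_comm _ (C _), ← smul_eq_C_mul,
    map_smul, smul_eq_mul, eq_div_iff (by positivity)]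
  have h1 : ((-1 : ℝ) ^ m) * (-1) ^ m = 1 := by rw [← mul_pow]; simp
  linear_combination (-1) ^ m * hJ + 2 * (2 ^ m * m.factorial : ℝ) ^ 2 * h1

/-! ### Diagonalisation of the quadratic form -/

/-- The coordinates in which the quadratic form diagonalises: the two top Legendre components are
split off, and the rest has too low a degree to be seen by the derivative terms. -/
lemma exists_rodrigues_decomp (q : ℕ) (u : ℝ[X]) (hu : u.degree ≤ (q + 1 : ℕ)) :
    ∃ (a b : ℝ) (w : ℝ[X]),
      u = C a * rodrigues (q + 1) + C b * rodrigues q + w ∧ derivative^[q] w = 0 := by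
  have hA : ((2 * (q + 1)).factorial : ℝ) ≠ 0 := by positivity
  have hB : ((2 * q).factorial : ℝ) ≠ 0 := by positivity
  -- The `q`-th derivative of `u` is affine; `a` and `b` match its two coefficients.
  obtain ⟨s, t, hst⟩ : ∃ s t : ℝ, derivative^[q] u = C s * X + C t := by
    refine exists_eq_X_add_C_of_natDegree_le_one ?_
    have := natDegree_le_of_degree_le hu
    exact (natDegree_iterate_derivative u q).trans (by omega)
  refine ⟨s / (2 * (q + 1)).factorial, t / (2 * q).factorial, _, (add_sub_cancel _ u).symm, ?_⟩
  rw [iterate_derivative_sub, iterate_map_add, iterate_derivative_C_mul,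
    iterate_derivative_C_mul, iterate_derivative_rodrigues, iterate_derivative_rodrigues_succ, hst,
    ← mul_assoc, ← C_mul, ← C_mul, div_mul_cancel₀ _ hA, div_mul_cancel₀ _ hB, sub_self]

/-- The quadratic form is diagonal in the coordinates `a`, `b`, `w`. -/
lemma form_eq (q : ℕ) (c d a b : ℝ) (w : ℝ[X]) (hw : derivative^[q] w = 0) (u : ℝ[X])
    (hu : u = C a * rodrigues (q + 1) + C b * rodrigues q + w) :
    polyInt (u ^ 2) + c / 2 * polyInt (derivative^[q] u ^ 2)
        + d / 2 * polyInt (derivative^[q + 1] u ^ 2)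
      = a ^ 2 * (2 * (2 ^ (q + 1) * (q + 1).factorial : ℝ) ^ 2 / (2 * (q + 1) + 1)
            + ((2 * (q + 1)).factorial : ℝ) ^ 2 * (c / 3 + d))
        + b ^ 2 * (2 * (2 ^ q * q.factorial : ℝ) ^ 2 / (2 * q + 1)
            + ((2 * q).factorial : ℝ) ^ 2 * c)
        + polyInt (w ^ 2) := by
  have hw' : derivative^[q + 1] w = 0 := by rw [Function.iterate_succ_apply', hw, derivative_zero]
  have hL : derivative^[q + 1] (rodrigues q) = 0 := by
    rw [Function.iterate_succ_apply', iterate_derivative_rodrigues, derivative_C]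
  have hq : derivative^[q] u = C (a * (2 * (q + 1)).factorial) * X + C (b * (2 * q).factorial) := by
    rw [hu, iterate_map_add, iterate_map_add, iterate_derivative_C_mul,
      iterate_derivative_C_mul, iterate_derivative_rodrigues, iterate_derivative_rodrigues_succ, hw,
      C_mul, C_mul]
    ring
  have hq1 : derivative^[q + 1] u = C (a * (2 * (q + 1)).factorial) := by
    rw [Function.iterate_succ_apply', hq]; simp
  have e1 : u ^ 2 = (a ^ 2) • rodrigues (q + 1) ^ 2 + (b ^ 2) • rodrigues q ^ 2 + w ^ 2
      + (2 * a * b) • (rodrigues (q + 1) * rodrigues q)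
      + (2 * a) • (rodrigues (q + 1) * w) + (2 * b) • (rodrigues q * w) := by
    simp only [hu, smul_eq_C_mul, C_mul, C_pow, C_ofNat]
    ring
  have e2 : derivative^[q] u ^ 2 = ((a * (2 * (q + 1)).factorial) ^ 2) • X ^ 2
      + (2 * (a * (2 * (q + 1)).factorial) * (b * (2 * q).factorial)) • X
      + ((b * (2 * q).factorial) ^ 2) • (1 : ℝ[X]) := by
    simp only [hq, smul_eq_C_mul, C_mul, C_pow, C_ofNat]
    ring
  have e3 : derivative^[q + 1] u ^ 2 = ((a * (2 * (q + 1)).factorial) ^ 2) • (1 : ℝ[X]) := by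
    simp only [hq1, smul_eq_C_mul, C_pow, mul_one]
  rw [e1, e2, e3]
  simp only [map_add, map_smul, smul_eq_mul, polyInt_one, polyInt_X, polyInt_X_sq,
    polyInt_rodrigues_sq, polyInt_rodrigues_mul_eq_zero hL, polyInt_rodrigues_mul_eq_zero hw,
    polyInt_rodrigues_mul_eq_zero hw']
  push_cast
  ring

lemma degree_rodrigues_le (m : ℕ) : (rodrigues m).degree ≤ m := by
  refine degree_le_of_natDegree_le ((natDegree_iterate_derivative _ m).trans ?_)
  have h1 : ((X ^ 2 - 1 : ℝ[X]) ^ m).natDegree ≤ m * 2 :=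
    natDegree_pow_le_of_le m (by compute_degree)
  omega

lemma rodrigues_ne_zero (m : ℕ) : rodrigues m ≠ 0 := by
  intro h
  have := iterate_derivative_rodrigues m
  rw [h, iterate_derivative_zero, eq_comm, C_eq_zero] at this
  exact (Nat.factorial_ne_zero (2 * m)) (by exact_mod_cast this)

/-- Clearing denominators in the bounds on the two parameters. -/
lemma bound_iff {A s n e : ℝ} (hA : 0 < A) (hn : 0 < n) :
    0 < 2 * s ^ 2 / n + A ^ 2 * e ↔ -(2 / ((A / s) ^ 2 * n)) < e := by
  have h : 2 * s ^ 2 / n + A ^ 2 * e = A ^ 2 * (e - -(2 / ((A / s) ^ 2 * n))) := by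
    field_simp
    ring
  rw [h, mul_pos_iff_of_pos_left (by positivity), sub_pos]

/-- **Stability characterization of two-parameter SSDG schemes.**
For `p ≥ 2`, `c_{p−1}, c_p ∈ ℝ` and `k_m = (2m)!/(2^m m!)`, the quadratic form
`u ↦ ∫ u² + (c_{p−1}/2) ∫ (u^{(p−1)})² + (c_p/2) ∫ (u^{(p)})²` is positive definite on
the polynomials of degree at most `p` if and only if
`c_{p−1} > −2/(k_{p−1}²(2p−1))` and `c_p > −c_{p−1}/3 − 2/(k_p²(2p+1))`. -/
theorem ssdg_two_parameter_stability_characterization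
    (p : ℕ) (hp : 2 ≤ p) (cpm1 cp : ℝ) :
    (∀ u : Polynomial ℝ, u.degree ≤ p → u ≠ 0 →
        0 < (∫ ξ in (-1:ℝ)..1, (u.eval ξ) ^ 2)
            + cpm1 / 2 * (∫ ξ in (-1:ℝ)..1, ((Polynomial.derivative^[p - 1] u).eval ξ) ^ 2)
            + cp / 2 * ∫ ξ in (-1:ℝ)..1, ((Polynomial.derivative^[p] u).eval ξ) ^ 2)
      ↔ (cpm1 > -2 / ((((2 * (p - 1)).factorial : ℝ)
              / (2 ^ (p - 1) * ((p - 1).factorial : ℝ))) ^ 2 * (2 * (p : ℝ) - 1))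
          ∧ cp > -(1 / 3) * cpm1
              - 2 / ((((2 * p).factorial : ℝ) / (2 ^ p * (p.factorial : ℝ))) ^ 2
                  * (2 * (p : ℝ) + 1))) := by
  obtain ⟨q, rfl⟩ : ∃ q, p = q + 1 := ⟨p - 1, by omega⟩
  simp only [integral_eval_sq, Nat.add_sub_cancel]
  have hb1 := bound_iff (A := ((2 * q).factorial : ℝ)) (s := 2 ^ q * q.factorial)
    (n := 2 * q + 1) (e := cpm1) (by positivity) (by positivity)
  have hb2 := bound_iff (A := ((2 * (q + 1)).factorial : ℝ)) (s := 2 ^ (q + 1) * (q + 1).factorial)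
    (n := 2 * (q + 1) + 1) (e := cpm1 / 3 + cp) (by positivity) (by positivity)
  have hn : 2 * ((q + 1 : ℕ) : ℝ) - 1 = 2 * q + 1 := by push_cast; ring
  have hn' : 2 * ((q + 1 : ℕ) : ℝ) + 1 = 2 * (q + 1) + 1 := by push_cast; ring
  rw [hn, hn', neg_div]
  constructor
  · intro h
    constructor
    · have h0 := h (rodrigues q) ((degree_rodrigues_le q).trans (by norm_cast; omega))
        (rodrigues_ne_zero q)
      rw [form_eq q cpm1 cp 0 1 0 (by simp) (rodrigues q) (by simp)] at h0
      exact hb1.1 (by simpa using h0)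
    · have h0 := h (rodrigues (q + 1)) (degree_rodrigues_le _) (rodrigues_ne_zero _)
      rw [form_eq q cpm1 cp 1 0 0 (by simp) (rodrigues (q + 1)) (by simp)] at h0
      have := hb2.1 (by simpa using h0)
      linarith
  · rintro ⟨h1, h2⟩ u hu hu0
    obtain ⟨a, b, w, huw, hw⟩ := exists_rodrigues_decomp q u hu
    rw [form_eq q cpm1 cp a b w hw u huw]
    have p1 := hb1.2 h1
    have p2 := hb2.2 (by linarith)
    have hw0 : 0 ≤ polyInt (w ^ 2) := by
      by_cases h : w = 0
      · simp [h]
      · exact (polyInt_sq_pos h).le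
    by_cases ha : a = 0
    · by_cases hb : b = 0
      · have hwne : w ≠ 0 := by
          rintro rfl
          exact hu0 (by simp [huw, ha, hb])
        have := polyInt_sq_pos hwne
        subst ha hb
        linarith
      · positivity
    · positivity
end

section
/- Stability characterization of two-parameter EESFR schemes. Let p ≥ 3, q_0, q_1 ∈ ℝ, and β = (2p−1)/(2p−3). Let M be the Legendre-basis mass matrix and let Q be the real (p+1)×(p+1) matrix whose only nonzero entries are Q_{p−1,p−1} = q_1, Q_{p,p} = q_0 and Q_{p−2,p} = Q_{p,p−2} = −β q_1. Then the symmetric matrix M + Q is positive definite if and only if q_1 > −2/(2p−1) and q_1² < (2(2p−3)/(2p−1)²)·(2/(2p+1) + q_0). -/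
/-!
Eliminating the off-diagonal pair of entries at `(p - 2, p)` by one symmetric row-and-column
operation shows that `M + Q` is congruent, through a transvection, to a diagonal matrix. Its
entries are those of `M` except for `2 / (2p - 1) + q1` in position `p - 1` and the Schur
complement `2 / (2p + 1) + q0 - β² q1² (2p - 3) / 2` in position `p`. Congruence by an invertible
matrix preserves positive definiteness (`posDef_iff_diagonal_pos`), and the two nontrivial
positivity conditions are the two stated inequalities.
-/


open Matrix

/-- The matrix on the left is `Uᵀ * diagonal d * U` for the transvection `U = 1 + single a c t`. -/
lemma posDef_iff_diagonal_pos {n : Type*} [Fintype n] [DecidableEq n] {a c : n} (hac : a ≠ c)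
    (d : n → ℝ) (t : ℝ) :
    (diagonal d + single a c (t * d a) + single c a (t * d a)
      + single c c (t * d a * t)).PosDef ↔ ∀ i, 0 < d i := by
  have hU : IsUnit (1 + single a c t : Matrix n n ℝ) := by
    rw [Matrix.isUnit_iff_isUnit_det]
    have := det_transvection_of_ne a c hac t
    rw [transvection] at this
    simp [this]
  rw [← posDef_diagonal_iff, ← hU.posDef_star_left_conjugate_iff (x := diagonal d)]
  have hs : star (1 + single a c t : Matrix n n ℝ) = 1 + single c a t := by
    rw [star_eq_conjTranspose, conjTranspose_add, conjTranspose_one, conjTranspose_single,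
      star_trivial]
  have h1 : diagonal d * single a c t = single a c (t * d a) := by
    ext i j
    rw [diagonal_mul, single_apply, single_apply]
    split_ifs with h
    · rw [← h.1, mul_comm]
    · simp
  have h2 : single c a t * diagonal d = single c a (t * d a) := by
    ext i j
    rw [mul_diagonal, single_apply, single_apply]
    split_ifs with h
    · rw [← h.2]
    · simp
  have : star (1 + single a c t : Matrix n n ℝ) * diagonal d * (1 + single a c t)
      = diagonal d + single a c (t * d a) + single c a (t * d a) + single c c (t * d a * t) := by
    rw [hs, add_mul, one_mul, h2, mul_add, mul_one, add_mul, h1, single_mul_single_same]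
    abel
  rw [this]

/-- **Stability characterization of two-parameter EESFR schemes.**
For `p ≥ 3`, `β = (2p−1)/(2p−3)`, `M` the Legendre mass matrix and `Q` the EESFR filter
matrix with only nonzero entries `Q_{p−1,p−1} = q₁`, `Q_{p,p} = q₀`,
`Q_{p−2,p} = Q_{p,p−2} = −βq₁`, the symmetric matrix `M + Q` is positive definite
if and only if `q₁ > −2/(2p−1)` and `q₁² < (2(2p−3)/(2p−1)²)(2/(2p+1)+q₀)`. -/
theorem eesfr_two_parameter_stability_characterization
    (p : ℕ) (hp : 3 ≤ p) (q0 q1 β : ℝ)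
    (hβ : β = (2 * (p : ℝ) - 1) / (2 * (p : ℝ) - 3))
    (M Q : Matrix (Fin (p + 1)) (Fin (p + 1)) ℝ)
    (hM : M = Matrix.diagonal (fun j : Fin (p + 1) => 2 / (2 * (j.val : ℝ) + 1)))
    (hQ : Q = Matrix.of fun i j : Fin (p + 1) =>
      if i.val = p - 1 ∧ j.val = p - 1 then q1
      else if i.val = p ∧ j.val = p then q0
      else if (i.val = p - 2 ∧ j.val = p) ∨ (i.val = p ∧ j.val = p - 2) then -β * q1
      else 0) :
    (M + Q).PosDef ↔
      (q1 > -2 / (2 * (p : ℝ) - 1) ∧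
        q1 ^ 2 < 2 * (2 * (p : ℝ) - 3) / (2 * (p : ℝ) - 1) ^ 2
            * (2 / (2 * (p : ℝ) + 1) + q0)) := by
  have hp' : (3 : ℝ) ≤ p := by exact_mod_cast hp
  have h3 : 0 < 2 * (p : ℝ) - 3 := by linarith
  have h1 : 0 < 2 * (p : ℝ) - 1 := by linarith
  have h2 : ((p - 2 : ℕ) : ℝ) = p - 2 := by rw [Nat.cast_sub (by omega)]; norm_num
  have h4 : ((p - 1 : ℕ) : ℝ) = p - 1 := by rw [Nat.cast_sub (by omega)]; norm_num
  have hma : 2 / (2 * ((p - 2 : ℕ) : ℝ) + 1) = 2 / (2 * (p : ℝ) - 3) := by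
    rw [h2]; congr 1; ring
  have hmb : 2 / (2 * ((p - 1 : ℕ) : ℝ) + 1) = 2 / (2 * (p : ℝ) - 1) := by
    rw [h4]; congr 1; ring
  set a : Fin (p + 1) := ⟨p - 2, by omega⟩ with ha
  set c : Fin (p + 1) := ⟨p, by omega⟩ with hc
  have hac : a ≠ c := by simp [ha, hc, Fin.ext_iff]; omega
  -- The multiplier that clears the entry `-β q1` using the pivot `2 / (2p - 3)`.
  set t : ℝ := -β * q1 * (2 * (p : ℝ) - 3) / 2 with ht
  set d : Fin (p + 1) → ℝ := fun j =>
    if j.val = p - 1 then 2 / (2 * (p : ℝ) - 1) + q1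
    else if j.val = p then 2 / (2 * (p : ℝ) + 1) + q0 - (β * q1) ^ 2 * (2 * (p : ℝ) - 3) / 2
    else 2 / (2 * (j.val : ℝ) + 1) with hd
  have hda : d a = 2 / (2 * (p : ℝ) - 3) := by
    simp only [hd, ha]
    rw [if_neg (by omega), if_neg (by omega), hma]
  have htd : t * d a = -β * q1 := by rw [hda, ht]; field_simp
  have hMQ : M + Q = diagonal d + single a c (t * d a) + single c a (t * d a)
      + single c c (t * d a * t) := by
    rw [htd, hM, hQ]
    ext i j
    by_cases hij : i = j
    · subst hij
      simp only [Matrix.add_apply, diagonal_apply_eq, of_apply, single_apply, ha, hc, hd,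
        Fin.ext_iff]
      by_cases e1 : i.val = p - 1
      · have : i.val ≠ p := by omega
        rw [if_pos ⟨e1, e1⟩, if_pos e1, if_neg (by omega), if_neg (by omega), if_neg (by omega),
          e1, hmb]
        ring
      · by_cases e2 : i.val = p
        · rw [if_neg (by omega), if_pos ⟨e2, e2⟩, if_neg e1, if_pos e2, if_neg (by omega),
            if_neg (by omega), if_pos (by omega), e2, ht]
          ring
        · rw [if_neg (by omega), if_neg (by omega), if_neg (by omega), if_neg e1, if_neg e2,
            if_neg (by omega), if_neg (by omega), if_neg (by omega)]
          ring
    · have hij' : i.val ≠ j.val := fun h => hij (Fin.ext h)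
      simp only [Matrix.add_apply, diagonal_apply_ne _ hij, of_apply, single_apply, ha, hc,
        Fin.ext_iff]
      split_ifs <;> first | omega | ring
  rw [hMQ, posDef_iff_diagonal_pos hac d t]
  have key : 2 / (2 * (p : ℝ) + 1) + q0 - (β * q1) ^ 2 * (2 * (p : ℝ) - 3) / 2
      = (2 * (p : ℝ) - 1) ^ 2 / (2 * (2 * (p : ℝ) - 3))
        * (2 * (2 * (p : ℝ) - 3) / (2 * (p : ℝ) - 1) ^ 2 * (2 / (2 * (p : ℝ) + 1) + q0)
          - q1 ^ 2) := by
    rw [hβ]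
    generalize 2 / (2 * (p : ℝ) + 1) + q0 = y
    field_simp
  have hpos : 0 < (2 * (p : ℝ) - 1) ^ 2 / (2 * (2 * (p : ℝ) - 3)) := by positivity
  rw [neg_div]
  constructor
  · intro h
    have hb := h ⟨p - 1, by omega⟩
    have hcc := h c
    simp only [hd, hc, if_true] at hb hcc
    rw [if_neg (by omega), key, mul_pos_iff_of_pos_left hpos] at hcc
    constructor <;> linarith
  · rintro ⟨hb, hcc⟩ j
    simp only [hd]
    split_ifs
    · linarith
    · rw [key]
      exact mul_pos hpos (by linarith)
    · positivity
end

section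
/- Lemma A.1 (equivalence of filtered DG and flux reconstruction schemes). Let p ≥ 0 and α ∈ (0,1], let M, D, r, l be the Legendre-basis mass matrix, differentiation matrix and boundary vectors, and let K, Q be real (p+1)×(p+1) matrices such that M+K and M+Q are invertible. For θ ∈ ℝ define the complex (p+1)×(p+1) matrices H_FDG(θ) = (M+K)^{−1}MD − (α/2)(M+K)^{−1}r rᵀ + ((2−α)/2)(M+K)^{−1}l lᵀ + (α/2)e^{iθ}(M+K)^{−1}r lᵀ − ((2−α)/2)e^{−iθ}(M+K)^{−1}l rᵀ and H_FR(θ) = D − (α/2)(M+Q)^{−1}r rᵀ + ((2−α)/2)(M+Q)^{−1}l lᵀ + (α/2)e^{iθ}(M+Q)^{−1}r lᵀ − ((2−α)/2)e^{−iθ}(M+Q)^{−1}l rᵀ. Then H_FDG(θ) = H_FR(θ) for every θ ∈ ℝ if and only if KD = 0, (M+K)^{−1}r = (M+Q)^{−1}r and (M+K)^{−1}l = (M+Q)^{−1}l. -/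
/-!
Entrywise, `HFDG θ - HFR θ` is a trigonometric polynomial `a + b e^{iθ} + c e^{-iθ}`, so it vanishes
for all `θ` iff `a = b = c = 0` (`trig_coeffs_eq_zero`). Since `r` and `l` both have first entry `1`,
the first column of the `e^{iθ}` coefficient, divided by `α / 2 ≠ 0`, gives
`(M + K)⁻¹ r = (M + Q)⁻¹ r`, and that of the `e^{-iθ}` coefficient, divided by `(2 - α) / 2 ≠ 0`,
gives `(M + K)⁻¹ l = (M + Q)⁻¹ l`. The rank-one parts of the constant coefficient then cancel,
leaving `(M + K)⁻¹ M D = D`, which is equivalent to `K D = 0` (`inv_mul_mul_eq_iff`).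
-/

open Matrix Complex

/-- The functions `1`, `e^{iθ}`, `e^{-iθ}` are linearly independent over `ℂ`. -/
lemma trig_coeffs_eq_zero {a b c : ℂ}
    (h : ∀ θ : ℝ, a + b * Complex.exp (Complex.I * θ) + c * Complex.exp (-(Complex.I * θ)) = 0) :
    a = 0 ∧ b = 0 ∧ c = 0 := by
  -- The angles `0`, `π`, `π / 2` already determine the three coefficients.
  have h0 : a + b + c = 0 := by simpa using h 0
  have hpi : a - b - c = 0 := by
    have := h Real.pi
    rw [mul_comm Complex.I, Complex.exp_neg, Complex.exp_pi_mul_I] at this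
    norm_num at this
    linear_combination this
  have hhalf : a + b * Complex.I - c * Complex.I = 0 := by
    have := h (Real.pi / 2)
    push_cast at this
    rw [mul_comm Complex.I, Complex.exp_neg, Complex.exp_pi_div_two_mul_I, Complex.inv_I] at this
    linear_combination this
  have ha : a = 0 := by linear_combination (h0 + hpi) / 2
  have hbc : b - c = 0 := by
    linear_combination (-Complex.I) * hhalf + Complex.I * ha + (b - c) * Complex.I_mul_I
  exact ⟨ha, by linear_combination (h0 - ha + hbc) / 2, by linear_combination (h0 - ha - hbc) / 2⟩

lemma inv_mul_mul_eq_iff {n : Type*} [Fintype n] [DecidableEq n] {M K D : Matrix n n ℝ}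
    (h : IsUnit (M + K)) : (M + K)⁻¹ * M * D = D ↔ K * D = 0 := by
  have hdet := (Matrix.isUnit_iff_isUnit_det _).1 h
  constructor
  · intro e
    have e' : M * D = (M + K) * D := by
      conv_rhs => rw [← e, Matrix.mul_assoc, Matrix.mul_nonsing_inv_cancel_left _ _ hdet]
    rwa [Matrix.add_mul, left_eq_add] at e'
  · intro e
    have e' : M * D = (M + K) * D := by rw [Matrix.add_mul, e, add_zero]
    rw [Matrix.mul_assoc, e', Matrix.nonsing_inv_mul_cancel_left _ _ hdet]

/-- **Lemma A.1 (equivalence of filtered DG and flux reconstruction schemes).**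
With `M, D, r, l` the Legendre-basis mass matrix, differentiation matrix and boundary
vectors, `α ∈ (0,1]`, and `M+K`, `M+Q` invertible, the Von Neumann symbols of the
filtered DG scheme (filter `K`) and of the FR scheme (matrix `Q`) agree for every
wavenumber `θ` if and only if `KD = 0`, `(M+K)⁻¹r = (M+Q)⁻¹r` and
`(M+K)⁻¹l = (M+Q)⁻¹l`. -/
theorem fdg_fr_equivalence
    (p : ℕ) (α : ℝ) (hα : 0 < α ∧ α ≤ 1)
    (M D : Matrix (Fin (p + 1)) (Fin (p + 1)) ℝ)
    (r l : Fin (p + 1) → ℝ)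
    (hM : M = Matrix.diagonal (fun j : Fin (p + 1) => 2 / (2 * (j.val : ℝ) + 1)))
    (hD : D = Matrix.of fun i j : Fin (p + 1) =>
      if i.val < j.val ∧ Odd (i.val + j.val) then 2 * (i.val : ℝ) + 1 else 0)
    (hr : r = fun _ => 1) (hl : l = fun j => (-1 : ℝ) ^ j.val)
    (K Q : Matrix (Fin (p + 1)) (Fin (p + 1)) ℝ)
    (hKinv : IsUnit (M + K)) (hQinv : IsUnit (M + Q))
    (HFDG HFR : ℝ → Matrix (Fin (p + 1)) (Fin (p + 1)) ℂ)
    (hHFDG : ∀ θ : ℝ, HFDG θ =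
      ((M + K)⁻¹ * M * D).map (Complex.ofReal)
        - ((α / 2 : ℝ) • Matrix.vecMulVec ((M + K)⁻¹ *ᵥ r) r).map (Complex.ofReal)
        + ((((2 : ℝ) - α) / 2) • Matrix.vecMulVec ((M + K)⁻¹ *ᵥ l) l).map (Complex.ofReal)
        + ((↑(α / 2) * Complex.exp (Complex.I * θ)) •
            (Matrix.vecMulVec ((M + K)⁻¹ *ᵥ r) l).map (Complex.ofReal))
        - ((↑(((2 : ℝ) - α) / 2) * Complex.exp (-(Complex.I * θ))) •
            (Matrix.vecMulVec ((M + K)⁻¹ *ᵥ l) r).map (Complex.ofReal)))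
    (hHFR : ∀ θ : ℝ, HFR θ =
      D.map (Complex.ofReal)
        - ((α / 2 : ℝ) • Matrix.vecMulVec ((M + Q)⁻¹ *ᵥ r) r).map (Complex.ofReal)
        + ((((2 : ℝ) - α) / 2) • Matrix.vecMulVec ((M + Q)⁻¹ *ᵥ l) l).map (Complex.ofReal)
        + ((↑(α / 2) * Complex.exp (Complex.I * θ)) •
            (Matrix.vecMulVec ((M + Q)⁻¹ *ᵥ r) l).map (Complex.ofReal))
        - ((↑(((2 : ℝ) - α) / 2) * Complex.exp (-(Complex.I * θ))) •
            (Matrix.vecMulVec ((M + Q)⁻¹ *ᵥ l) r).map (Complex.ofReal))) :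
    (∀ θ : ℝ, HFDG θ = HFR θ) ↔
      (K * D = 0 ∧ (M + K)⁻¹ *ᵥ r = (M + Q)⁻¹ *ᵥ r ∧ (M + K)⁻¹ *ᵥ l = (M + Q)⁻¹ *ᵥ l) := by
  have hr0 : r 0 = 1 := by rw [hr]
  have hl0 : l 0 = 1 := by simp [hl]
  have hα2 : (α : ℂ) ≠ 0 := by exact_mod_cast hα.1.ne'
  have hα3 : (2 - α : ℂ) ≠ 0 := by
    have : (2 - α : ℝ) ≠ 0 := by linarith [hα.2]
    exact_mod_cast this
  rw [← inv_mul_mul_eq_iff hKinv]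
  clear hM hD hr hl
  constructor
  · intro h
    have key : ∀ i j, _ := fun i j => trig_coeffs_eq_zero
      (a := (((M + K)⁻¹ * M * D) i j - D i j : ℂ)
        - α / 2 * (((M + K)⁻¹ *ᵥ r) i - ((M + Q)⁻¹ *ᵥ r) i) * r j
        + (2 - α) / 2 * (((M + K)⁻¹ *ᵥ l) i - ((M + Q)⁻¹ *ᵥ l) i) * l j)
      (b := α / 2 * (((M + K)⁻¹ *ᵥ r) i - ((M + Q)⁻¹ *ᵥ r) i) * l j)
      (c := -((2 - α) / 2 * (((M + K)⁻¹ *ᵥ l) i - ((M + Q)⁻¹ *ᵥ l) i) * r j))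
      (fun θ => by
        have e := congrFun (congrFun (h θ) i) j
        rw [hHFDG, hHFR] at e
        simp only [Matrix.sub_apply, Matrix.add_apply, Matrix.map_apply, Matrix.smul_apply,
          Matrix.vecMulVec_apply, smul_eq_mul] at e
        push_cast at e
        linear_combination e)
    have hru : (M + K)⁻¹ *ᵥ r = (M + Q)⁻¹ *ᵥ r := by
      ext i
      have := (key i 0).2.1
      rw [hl0] at this
      simpa [hα2, sub_eq_zero] using this
    have hlu : (M + K)⁻¹ *ᵥ l = (M + Q)⁻¹ *ᵥ l := by
      ext i
      have := (key i 0).2.2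
      rw [hr0] at this
      simpa [hα3, sub_eq_zero] using this
    refine ⟨?_, hru, hlu⟩
    ext i j
    have := (key i j).1
    rw [hru, hlu] at this
    simp only [sub_self, mul_zero, zero_mul, sub_zero, add_zero, sub_eq_zero] at this
    exact_mod_cast this
  · rintro ⟨h1, h2, h3⟩ θ
    rw [hHFDG, hHFR, h1, h2, h3]
end

section
/- Structure of filters compatible with flux reconstruction. Let p ≥ 0, let D be the Legendre-basis differentiation matrix, and let K be a real (p+1)×(p+1) matrix with KD = 0. Then all columns of K except possibly the last one vanish: K_{ij} = 0 for every i ∈ {0,…,p} and every j ∈ {0,…,p−1}. -/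
/-!
Columns `1, …, p` of `D` are upper triangular once shifted: column `j + 1` is supported on the rows
`k ≤ j`, and its entry in row `j` is `2 * j + 1 ≠ 0`. Hence `K * D = 0` is a triangular system for
the first `p` columns of `K`, solved by forward substitution: entry `(i, j + 1)` of `K * D` gives
`K i j = 0` as soon as `K i k = 0` for every `k < j`.
-/

open Matrix

/-- **Structure of filters compatible with flux reconstruction.**
If `D` is the Legendre-basis differentiation matrix and `K` is a real
`(p+1)×(p+1)` matrix with `KD = 0`, then all columns of `K` except possibly the
last one vanish: `K_{ij} = 0` for all `i` and all `j ∈ {0,…,p−1}`. -/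
theorem filter_compatible_with_fr_structure
    (p : ℕ)
    (D : Matrix (Fin (p + 1)) (Fin (p + 1)) ℝ)
    (hD : D = Matrix.of fun i j : Fin (p + 1) =>
      if i.val < j.val ∧ Odd (i.val + j.val) then 2 * (i.val : ℝ) + 1 else 0)
    (K : Matrix (Fin (p + 1)) (Fin (p + 1)) ℝ)
    (hK : K * D = 0) :
    ∀ i j : Fin (p + 1), j.val < p → K i j = 0 := by
  intro i j
  -- Strong induction on the column index `j`.
  induction hn : j.val using Nat.strong_induction_on generalizing j with
  | _ n ih =>
    intro hj
    subst hn
    have h : (K * D) i ⟨j.val + 1, by omega⟩ = 0 := by rw [hK]; rfl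
    -- Column `j + 1` of `D` is supported on rows `k ≤ j`; the terms `k < j` vanish by induction.
    rw [Matrix.mul_apply, Finset.sum_eq_single j] at h
    · have hodd : Odd (j.val + (j.val + 1)) := ⟨j.val, by ring⟩
      simp only [hD, Matrix.of_apply, Nat.lt_succ_self, hodd, and_self, if_true] at h
      exact (mul_eq_zero.mp h).resolve_right (by positivity)
    · intro k _ hk
      rcases lt_or_gt_of_ne (Fin.val_ne_of_ne hk) with hlt | hgt
      · rw [ih k.val hlt k rfl (by omega), zero_mul]
      · have hnot : ¬ k.val < j.val + 1 := by omega
        simp only [hD, Matrix.of_apply, hnot, false_and, if_false, mul_zero]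
    · exact fun hmem => absurd (Finset.mem_univ j) hmem
end

section
/- Two-parameter SSDG schemes expressible in flux reconstruction form are exactly the ESFR schemes. Let p ≥ 2 and c_{p−1}, c_p ∈ ℝ, and define the bilinear form B(u,v) = (c_{p−1}/2) ∫_{−1}^{1} u^{(p−1)} v^{(p−1)} dξ + (c_p/2) ∫_{−1}^{1} u^{(p)} v^{(p)} dξ on real polynomials of degree at most p. Then B(w′, v) = 0 for all polynomials w, v of degree at most p (the flux-reconstruction compatibility condition K_{SSDG}·D = 0) if and only if c_{p−1} = 0. -/
/-!
The `p`-th derivative of `w′` is the `(p+1)`-st derivative of `w`, which vanishes on polynomials of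
degree at most `p`, so `cp` never contributes to `B (w′, v)`, and for `cpm1 = 0`
nothing is left. Conversely, for `w = X ^ p` and `v = w′`
both `(p-1)`-st derivatives are the constant `p!`, so that `B (w′, v) = cpm1 * (p!) ^ 2`, which is
zero only if `cpm1 = 0`.
-/

open Polynomial intervalIntegral

/-- **Two-parameter SSDG schemes expressible in flux reconstruction form are exactly
the ESFR schemes.** For `p ≥ 2` and the two-parameter SSDG filter bilinear form
`B(u,v) = (c_{p−1}/2)∫ u^{(p−1)} v^{(p−1)} + (c_p/2)∫ u^{(p)} v^{(p)}`, the
flux-reconstruction compatibility condition `B(w′, v) = 0` for all `w, v ∈ P_p`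
holds if and only if `c_{p−1} = 0`. -/
theorem ssdg_fr_compatible_iff_esfr
    (p : ℕ) (hp : 2 ≤ p) (cpm1 cp : ℝ)
    (B : Polynomial ℝ → Polynomial ℝ → ℝ)
    (hB : ∀ u v : Polynomial ℝ, B u v =
      cpm1 / 2 * (∫ ξ in (-1:ℝ)..1,
          (Polynomial.derivative^[p - 1] u).eval ξ * (Polynomial.derivative^[p - 1] v).eval ξ)
        + cp / 2 * ∫ ξ in (-1:ℝ)..1,
            (Polynomial.derivative^[p] u).eval ξ * (Polynomial.derivative^[p] v).eval ξ) :
    (∀ w v : Polynomial ℝ, w.degree ≤ p → v.degree ≤ p →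
        B (Polynomial.derivative w) v = 0) ↔ cpm1 = 0 := by
  obtain ⟨q, rfl⟩ : ∃ q, p = q + 1 := ⟨p - 1, by omega⟩
  have hvan (w : Polynomial ℝ) (hw : w.degree ≤ (q + 1 : ℕ)) :
      Polynomial.derivative^[q + 1] (Polynomial.derivative w) = 0 := by
    rw [← Function.iterate_succ_apply]
    exact iterate_derivative_eq_zero (Nat.lt_succ_of_le (natDegree_le_of_degree_le hw))
  constructor
  · intro h
    have hdeg : ((X : Polynomial ℝ) ^ (q + 1)).degree ≤ (q + 1 : ℕ) := degree_X_pow_le _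
    -- Testing `X ^ p` against its own derivative leaves `cpm1 / 2` times `∫ (p!) ^ 2 ≠ 0`.
    have h1 := h (X ^ (q + 1)) (Polynomial.derivative (X ^ (q + 1))) hdeg
      ((degree_derivative_le).trans hdeg)
    have htop : Polynomial.derivative^[q] (Polynomial.derivative ((X : Polynomial ℝ) ^ (q + 1)))
        = C ((q + 1).factorial : ℝ) := by
      rw [← Function.iterate_succ_apply, iterate_derivative_X_pow_eq_C_mul,
        Nat.descFactorial_self]
      simp
    rw [hB, hvan _ hdeg, Nat.add_sub_cancel, htop] at h1
    have hfac : ((q + 1).factorial : ℝ) ≠ 0 := by positivity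
    simp only [eval_C, eval_zero, integral_const, smul_eq_mul, mul_zero, add_zero] at h1
    norm_num at h1
    simpa [Nat.factorial_ne_zero] using h1
  · rintro rfl w v hw -
    rw [hB, hvan w hw]
    simp
end

section
/- Two-parameter EESFR schemes expressible in filtered DG form are exactly the ESFR schemes. Let p ≥ 3, q_0, q_1 ∈ ℝ and β = (2p−1)/(2p−3). Let M, D, r, l be the Legendre-basis mass matrix, differentiation matrix and boundary vectors, and let Q be the real (p+1)×(p+1) matrix whose only nonzero entries are Q_{p−1,p−1} = q_1, Q_{p,p} = q_0 and Q_{p−2,p} = Q_{p,p−2} = −β q_1; assume M+Q is invertible. If there exists a real (p+1)×(p+1) matrix K with KD = 0, M+K invertible, (M+K)^{−1}r = (M+Q)^{−1}r and (M+K)^{−1}l = (M+Q)^{−1}l, then q_1 = 0. -/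
open Matrix

/-! The columns of `D` span the first `p` coordinate vectors, so `K * D = 0` leaves only the last
column of `K`. With `x = (M + Q)⁻¹ r` and `y = (M + Q)⁻¹ l`, the compatibility conditions become
`K x = Q x` and `K y = Q y`, whose row `p - 1` reads `k x_p = q₁ x_{p-1}` and
`k y_p = q₁ y_{p-1}` with `k = K_{p-1,p}`. Now `M + Q` couples only indices of equal parity, hence
`y_j = (-1)^j x_j`; as `p - 1` and `p` have opposite parity, the two equations force
`q₁ x_{p-1} = 0`. Finally row `p - 1` of `(M + Q) x = r` is `(m_{p-1} + q₁) x_{p-1} = 1`,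
so `x_{p-1} ≠ 0`. The value of `β` plays no role. -/

/-- A matrix annihilating the Legendre differentiation matrix from the left vanishes outside its
last column: column `j + 1` of `D` is supported on `i ≤ j` with nonzero entry at `i = j`. -/
lemma apply_eq_zero_of_mul_legendreD {p : ℕ} {K D : Matrix (Fin (p + 1)) (Fin (p + 1)) ℝ}
    (hD : D = Matrix.of fun i j : Fin (p + 1) =>
      if i.val < j.val ∧ Odd (i.val + j.val) then 2 * (i.val : ℝ) + 1 else 0)
    (hKD : K * D = 0) (a : Fin (p + 1)) :
    ∀ (n : ℕ) (hn : n < p), K a ⟨n, by omega⟩ = 0 := by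
  intro n
  induction n using Nat.strong_induction_on with
  | _ n ih =>
    intro hn
    have h := congrFun (congrFun hKD a) ⟨n + 1, by omega⟩
    rw [Matrix.mul_apply, Finset.sum_eq_single (⟨n, by omega⟩ : Fin (p + 1))] at h
    · have hodd : Odd (n + (n + 1)) := ⟨n, by ring⟩
      simp only [hD, Matrix.of_apply, hodd, Nat.lt_succ_self, and_self, if_true,
        Matrix.zero_apply] at h
      exact (mul_eq_zero.mp h).resolve_right (by positivity)
    · intro b _ hb
      rcases lt_trichotomy b.val n with hlt | heq | hgt
      · rw [ih b.val hlt (by omega), zero_mul]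
      · exact absurd (Fin.ext heq) hb
      · have : ¬ b.val < n + 1 := by omega
        rw [hD, Matrix.of_apply, if_neg (fun h => this h.1), mul_zero]
    · simp

/-- A matrix coupling only indices of equal parity commutes with `x_j ↦ (-1)^j x_j`. -/
lemma mulVec_neg_one_pow {n : ℕ} {A : Matrix (Fin n) (Fin n) ℝ}
    (hA : ∀ i j, Odd (i.val + j.val) → A i j = 0) (x : Fin n → ℝ) :
    A *ᵥ (fun j => (-1 : ℝ) ^ j.val * x j) = fun i => (-1 : ℝ) ^ i.val * (A *ᵥ x) i := by
  ext i
  simp only [Matrix.mulVec, dotProduct, Finset.mul_sum]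
  refine Finset.sum_congr rfl fun j _ => ?_
  rcases Nat.even_or_odd (i.val + j.val) with h | h
  · have : (-1 : ℝ) ^ i.val = (-1) ^ j.val := by
      rcases Nat.even_or_odd i.val with hi | hi
      · rw [hi.neg_one_pow, ((Nat.even_add.mp h).mp hi).neg_one_pow]
      · have hj : Odd j.val := by grind
        rw [hi.neg_one_pow, hj.neg_one_pow]
    rw [this]; ring
  · rw [hA i j h]; ring

/-- **Two-parameter EESFR schemes expressible in filtered DG form are exactly the
ESFR schemes.** Let `M, D, r, l` be the Legendre-basis mass matrix, differentiation
matrix and boundary vectors, and let `Q` be the two-parameter EESFR filter matrix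
with parameters `(q₀, q₁)` and `β = (2p−1)/(2p−3)`, with `M+Q` invertible. If there
exists a real matrix `K` with `KD = 0`, `M+K` invertible, `(M+K)⁻¹r = (M+Q)⁻¹r` and
`(M+K)⁻¹l = (M+Q)⁻¹l`, then `q₁ = 0`. -/
theorem eesfr_fdg_compatible_iff_esfr
    (p : ℕ) (hp : 3 ≤ p) (q0 q1 β : ℝ)
    (hβ : β = (2 * (p : ℝ) - 1) / (2 * (p : ℝ) - 3))
    (M D : Matrix (Fin (p + 1)) (Fin (p + 1)) ℝ)
    (r l : Fin (p + 1) → ℝ)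
    (hM : M = Matrix.diagonal (fun j : Fin (p + 1) => 2 / (2 * (j.val : ℝ) + 1)))
    (hD : D = Matrix.of fun i j : Fin (p + 1) =>
      if i.val < j.val ∧ Odd (i.val + j.val) then 2 * (i.val : ℝ) + 1 else 0)
    (hr : r = fun _ => 1) (hl : l = fun j => (-1 : ℝ) ^ j.val)
    (Q : Matrix (Fin (p + 1)) (Fin (p + 1)) ℝ)
    (hQ : Q = Matrix.of fun i j : Fin (p + 1) =>
      if i.val = p - 1 ∧ j.val = p - 1 then q1
      else if i.val = p ∧ j.val = p then q0
      else if (i.val = p - 2 ∧ j.val = p) ∨ (i.val = p ∧ j.val = p - 2) then -β * q1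
      else 0)
    (hQinv : IsUnit (M + Q))
    (hK : ∃ K : Matrix (Fin (p + 1)) (Fin (p + 1)) ℝ,
      K * D = 0 ∧ IsUnit (M + K) ∧
        (M + K)⁻¹ *ᵥ r = (M + Q)⁻¹ *ᵥ r ∧ (M + K)⁻¹ *ᵥ l = (M + Q)⁻¹ *ᵥ l) :
    q1 = 0 := by
  obtain ⟨K, hKD, hKu, hKr, hKl⟩ := hK
  have solve : ∀ (A : Matrix (Fin (p + 1)) (Fin (p + 1)) ℝ), IsUnit A → ∀ v,
      A *ᵥ (A⁻¹ *ᵥ v) = v := fun A hA v => by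
    rw [Matrix.mulVec_mulVec, Matrix.mul_nonsing_inv _ ((Matrix.isUnit_iff_isUnit_det A).mp hA),
      Matrix.one_mulVec]
  set x := (M + Q)⁻¹ *ᵥ r with hx
  set y := (M + Q)⁻¹ *ᵥ l with hy
  have hxQ : (M + Q) *ᵥ x = r := solve _ hQinv r
  have hxK : (M + K) *ᵥ x = r := by rw [← hKr]; exact solve _ hKu r
  have hyQ : (M + Q) *ᵥ y = l := solve _ hQinv l
  have hyK : (M + K) *ᵥ y = l := by rw [← hKl]; exact solve _ hKu l
  have hpar : ∀ i j : Fin (p + 1), Odd (i.val + j.val) → (M + Q) i j = 0 := by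
    intro i j hij
    have hne : i ≠ j := by
      rintro rfl
      exact (Nat.not_odd_iff_even.mpr ⟨_, rfl⟩) hij
    rw [Matrix.add_apply, hM, Matrix.diagonal_apply_ne _ hne, hQ, Matrix.of_apply]
    rw [if_neg, if_neg, if_neg, add_zero]
    all_goals grind
  have hyx : y = fun j => (-1 : ℝ) ^ j.val * x j := by
    apply Matrix.mulVec_injective_of_isUnit hQinv
    change (M + Q) *ᵥ y = (M + Q) *ᵥ _
    rw [mulVec_neg_one_pow hpar, hxQ, hyQ, hl, hr]
    simp
  let a : Fin (p + 1) := ⟨p - 1, by omega⟩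
  let b : Fin (p + 1) := ⟨p, by omega⟩
  have hQrow : ∀ v, (Q *ᵥ v) a = q1 * v a := by
    intro v
    rw [Matrix.mulVec, dotProduct, Finset.sum_eq_single a]
    · simp [hQ, a]
    · intro j _ hj
      have hj' : j.val ≠ p - 1 := fun h => hj (Fin.ext h)
      have h1 : p - 1 ≠ p := by omega
      have h2 : p - 1 ≠ p - 2 := by omega
      simp [hQ, a, hj', h1, h2]
    · simp
  have hKrow : ∀ v, (K *ᵥ v) a = K a b * v b := by
    intro v
    rw [Matrix.mulVec, dotProduct, Finset.sum_eq_single b]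
    · intro j _ hj
      have hj' : j.val ≠ p := fun h => hj (Fin.ext h)
      rw [apply_eq_zero_of_mul_legendreD hD hKD a j.val (by omega), zero_mul]
    · simp
  have key : ∀ v w, (M + Q) *ᵥ v = w → (M + K) *ᵥ v = w → K a b * v b = q1 * v a := by
    intro v w h1 h2
    rw [← hQrow, ← hKrow]
    have := congrFun (h1.trans h2.symm) a
    simp only [Matrix.add_mulVec, Pi.add_apply] at this
    linarith
  have e1 := key x r hxQ hxK
  have e2 := key y l hyQ hyK
  have hs : (-1 : ℝ) ^ p = -(-1) ^ (p - 1) := by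
    obtain ⟨n, rfl⟩ : ∃ n, p = n + 1 := ⟨p - 1, by omega⟩
    rw [Nat.add_sub_cancel, pow_succ]; ring
  simp only [hyx, a, b] at e2
  rw [hs] at e2
  have hs0 : (-1 : ℝ) ^ (p - 1) ≠ 0 := pow_ne_zero _ (by norm_num)
  have e3 : -(K a b * x b) = q1 * x a := by
    apply mul_left_cancel₀ hs0
    simp only [a, b]
    linarith
  have e4 : q1 * x a = 0 := by linarith
  rcases mul_eq_zero.mp e4 with h | h
  · exact h
  · exfalso
    have := congrFun hxQ a
    rw [Matrix.add_mulVec, Pi.add_apply, hQrow, hM, Matrix.mulVec_diagonal, h, hr] at this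
    simp at this
end

section
/- FDG representation of FR schemes for the upwind flux. Let p ≥ 0, let M, D, l be the Legendre-basis mass matrix, differentiation matrix and left boundary vector, and let Q be a real (p+1)×(p+1) matrix such that M+Q is invertible and the last component of (M+Q)^{−1}l is nonzero, i.e., e_pᵀ(M+Q)^{−1}l ≠ 0. Then there exists a real (p+1)×(p+1) matrix K with KD = 0, M+K invertible, and (M+K)^{−1}l = (M+Q)^{−1}l. (These are exactly the conditions under which the FR scheme with matrix Q and a pure upwind numerical flux, α = 0, can be expressed as a filtered DG scheme with filter K.) -/
/-!
The last row of `D` vanishes, so every rank-one matrix `K = u eₚᵀ` satisfies `K D = 0`.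
Put `w = (M + Q)⁻¹ l`. The equation `(M + K) w = l` reads `M w + wₚ u = l`, which forces
`u = (l - M w) / wₚ`; this makes sense because `wₚ ≠ 0`. Since `K` only alters the last
column, `M + K` is upper triangular, with diagonal entries `M_{jj} ≠ 0` for `j < p` and
last diagonal entry `M_{pp} + uₚ = lₚ / wₚ = (-1)^p / wₚ ≠ 0`. Hence `M + K` is
invertible and `(M + K)⁻¹ l = w`.
-/

open Matrix

/-- **FDG representation of FR schemes for the upwind flux.**
Let `M, D, l` be the Legendre-basis mass matrix, differentiation matrix and left
boundary vector, and let `Q` be a real `(p+1)×(p+1)` matrix with `M+Q` invertible and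
`e_pᵀ(M+Q)⁻¹l ≠ 0`. Then there exists a real matrix `K` with `KD = 0`, `M+K`
invertible and `(M+K)⁻¹l = (M+Q)⁻¹l`; these are exactly the conditions under which
the FR scheme with matrix `Q` and a pure upwind numerical flux (`α = 0`) can be
expressed as a filtered DG scheme with filter `K`. -/
theorem fr_upwind_fdg_representation
    (p : ℕ)
    (M D : Matrix (Fin (p + 1)) (Fin (p + 1)) ℝ)
    (l : Fin (p + 1) → ℝ)
    (hM : M = Matrix.diagonal (fun j : Fin (p + 1) => 2 / (2 * (j.val : ℝ) + 1)))
    (hD : D = Matrix.of fun i j : Fin (p + 1) =>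
      if i.val < j.val ∧ Odd (i.val + j.val) then 2 * (i.val : ℝ) + 1 else 0)
    (hl : l = fun j => (-1 : ℝ) ^ j.val)
    (Q : Matrix (Fin (p + 1)) (Fin (p + 1)) ℝ)
    (hQinv : IsUnit (M + Q))
    (hlast : ((M + Q)⁻¹ *ᵥ l) (Fin.last p) ≠ 0) :
    ∃ K : Matrix (Fin (p + 1)) (Fin (p + 1)) ℝ,
      K * D = 0 ∧ IsUnit (M + K) ∧ (M + K)⁻¹ *ᵥ l = (M + Q)⁻¹ *ᵥ l := by
  set w := (M + Q)⁻¹ *ᵥ l with hw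
  clear_value w
  set m : Fin (p + 1) → ℝ := fun j => 2 / (2 * (j.val : ℝ) + 1) with hm
  have hmne : ∀ j, m j ≠ 0 := fun j => by simp only [hm]; positivity
  clear_value m
  have hlne : l (Fin.last p) ≠ 0 := by simp [hl]
  set K : Matrix (Fin (p + 1)) (Fin (p + 1)) ℝ := Matrix.of fun i j =>
    if j = Fin.last p then (l i - m i * w i) / w (Fin.last p) else 0 with hK
  have hKw : (M + K) *ᵥ w = l := by
    ext i
    rw [add_mulVec, Pi.add_apply, hM, mulVec_diagonal]
    simp only [hK, mulVec, dotProduct, of_apply, ite_mul, zero_mul, Finset.sum_ite_eq',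
      Finset.mem_univ, if_true]
    field_simp
    ring
  have htri : (M + K).BlockTriangular id := by
    intro i j hij
    have hij : j < i := hij
    have hj : j ≠ Fin.last p := (hij.trans_le (Fin.le_last i)).ne
    simp [hM, hK, hj, hij.ne']
  have hunit : IsUnit (M + K) := by
    rw [Matrix.isUnit_iff_isUnit_det, det_of_isUpperTriangular htri, isUnit_iff_ne_zero,
      Finset.prod_ne_zero_iff]
    intro j _
    by_cases hj : j = Fin.last p
    · subst hj
      have h : (M + K) (Fin.last p) (Fin.last p) = l (Fin.last p) / w (Fin.last p) := by
        simp only [hM, hK, Matrix.add_apply, diagonal_apply_eq, of_apply, if_true]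
        field_simp
        ring
      rw [h]
      exact div_ne_zero hlne hlast
    · simpa [hM, hK, hj] using hmne j
  refine ⟨K, ?_, hunit, ?_⟩
  · ext i j
    rw [mul_apply]
    refine Finset.sum_eq_zero fun k _ => ?_
    by_cases hk : k = Fin.last p
    · -- the last row of `D` is zero, as no column index exceeds `p`
      have hnot : ¬ (k < j) := by
        subst hk
        exact not_lt.mpr (Fin.le_last j)
      simp [hD, hnot]
    · simp [hK, hk]
  · rw [← hKw, mulVec_mulVec,
      nonsing_inv_mul _ ((Matrix.isUnit_iff_isUnit_det _).mp hunit), one_mulVec]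
end
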